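/- The contraction operator δ_o on decorated graphs of odd type is well defined on the quotient space D_o (i.e., it is compatible with the sign relations on decorations), it satisfies δ_o ∘ δ_o = 0, and it maps D_o^{k,m} into D_o^{k,m+1} for every order k and every degree m. -/

import Mathlib

open scoped Classical

/-!
# The odd graph complex `(D_o, δ_o)` and its coboundary operator

We encode a *decorated graph of odd type* as follows.  Its vertices are the natural
numbers `0, …, ve + vi - 1`: the labels `0, …, ve - 1` are the external vertices, placed
on the distinguished oriented circle in the (cyclically increasing) order of their labels,
and the labels `ve, …, ve + vi - 1` are the internal vertices.  (This realizes the
requirement that the labelling of the external vertices be cyclic w.r.t. the orientation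
of the circle; labels here are 0-indexed, the paper's labels being 1-indexed.)
Each edge is oriented (recorded by the ordered pair `(src, tgt)`), and each external small
loop carries, in addition, an ordering of its two half-edges; only the comparison of this
ordering with the edge orientation matters up to the sign rules, and this comparison is
recorded in the Boolean field `lp` (for non-loop edges `lp` is required to be `false`).
-/

/-- A decorated oriented edge: source and target vertex labels, together with the
half-edge-ordering bit for small loops. -/
structure OEdge where
  src : ℕ
  tgt : ℕ
  lp : Bool
deriving DecidableEq

/-- A decorated graph of odd type: `ve` external vertices (labels `0,…,ve-1`, lying on the
oriented circle in this cyclic order), `vi` internal vertices (labels `ve,…,ve+vi-1`), and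
a multiset of decorated oriented edges. -/
structure OddGraph where
  ve : ℕ
  vi : ℕ
  edges : Multiset OEdge
deriving DecidableEq

namespace OddGraph

/-- Total number of vertices. -/
def nv (g : OddGraph) : ℕ := g.ve + g.vi

/-- The valence of a vertex: the number of edge-ends at it. -/
def valence (g : OddGraph) (v : ℕ) : ℕ :=
  (g.edges.map fun e => (if e.src = v then 1 else 0) + (if e.tgt = v then 1 else 0)).sum

/-- Two vertices are adjacent if joined by an edge or if both lie on the circle. -/
def adj (g : OddGraph) (a b : ℕ) : Prop :=
  (∃ e ∈ g.edges, (e.src = a ∧ e.tgt = b) ∨ (e.src = b ∧ e.tgt = a)) ∨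
    (a < g.ve ∧ b < g.ve)

/-- Connectivity of the graph (including the distinguished circle). -/
def Connected (g : OddGraph) : Prop :=
  ∀ a b, a < g.nv → b < g.nv → Relation.ReflTransGen g.adj a b

/-- A valid decorated graph of odd type: edges join actual vertices, non-loop edges carry
no half-edge-ordering bit, internal vertices are at least trivalent, external vertices
carry at least one edge-end, and the graph is connected. -/
def IsValid (g : OddGraph) : Prop :=
  (∀ e ∈ g.edges, e.src < g.nv ∧ e.tgt < g.nv) ∧
  (∀ e ∈ g.edges, e.src ≠ e.tgt → e.lp = false) ∧
  (∀ v, g.ve ≤ v → v < g.nv → 3 ≤ g.valence v) ∧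
  (∀ v, v < g.ve → 1 ≤ g.valence v) ∧
  g.Connected

/-- Number of edges. -/
def numEdges (g : OddGraph) : ℕ := Multiset.card g.edges

/-- The *order* of a graph: `e - v_i`. -/
def ordZ (g : OddGraph) : ℤ := (g.numEdges : ℤ) - (g.vi : ℤ)

/-- The *degree* of a graph: `2e - 3v_i - v_e`. -/
def degZ (g : OddGraph) : ℤ := 2 * (g.numEdges : ℤ) - 3 * (g.vi : ℤ) - (g.ve : ℤ)

/-- A *regular edge*: neither a small loop nor a chord. -/
def isRegular (g : OddGraph) (e : OEdge) : Prop :=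
  e.src ≠ e.tgt ∧ ¬(e.src < g.ve ∧ e.tgt < g.ve)

/-- Two vertices joined by more than one edge. -/
def hasDoubleEdge (g : OddGraph) : Prop :=
  ∃ e ∈ g.edges, ∃ f ∈ g.edges.erase e,
    (f.src = e.src ∧ f.tgt = e.tgt) ∨ (f.src = e.tgt ∧ f.tgt = e.src)

/-- An internal small loop. -/
def hasInternalLoop (g : OddGraph) : Prop :=
  ∃ e ∈ g.edges, e.src = e.tgt ∧ g.ve ≤ e.src

end OddGraph

/-- Vertex relabelling after merging the vertices `i` and `j`: the merged vertex receives
the label `min i j`, and all labels greater than `max i j` are lowered by one. -/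
def mergeMap (i j x : ℕ) : ℕ :=
  if x = i ∨ x = j then min i j else if max i j < x then x - 1 else x

namespace OddGraph

/-- Contraction of a regular edge `e`: the edge is removed and its end-points are merged. -/
def contractEdge (g : OddGraph) (e : OEdge) : OddGraph where
  ve := g.ve
  vi := g.vi - 1
  edges := (g.edges.erase e).map fun f =>
    ⟨mergeMap e.src e.tgt f.src, mergeMap e.src e.tgt f.tgt, f.lp⟩

/-- Contraction of the arc running (along the circle orientation) from the external vertex
`i` to the consecutive external vertex `j`.  A short chord joining `i` and `j` becomes an
external small loop whose half-edges are ordered consistently with the orientation of the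
circle (the bit `lp` then records the comparison of the inherited edge orientation with
this ordering). -/
def contractArc (g : OddGraph) (i j : ℕ) : OddGraph where
  ve := g.ve - 1
  vi := g.vi
  edges := g.edges.map fun f =>
    if f.src = i ∧ f.tgt = j then ⟨min i j, min i j, false⟩
    else if f.src = j ∧ f.tgt = i then ⟨min i j, min i j, true⟩
    else ⟨mergeMap i j f.src, mergeMap i j f.tgt, f.lp⟩

/-- The arcs of the circle, as ordered pairs of consecutive external vertices (oriented
along the circle). -/
def arcs (g : OddGraph) : List (ℕ × ℕ) :=
  if 2 ≤ g.ve then ((List.range (g.ve - 1)).map fun i => (i, i + 1)) ++ [(g.ve - 1, 0)]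
  else []

end OddGraph

/-- The contraction sign `σ(i,j)` (0-indexed version of the paper's
`σ(i,j) = (-1)^j` for `j > i` and `(-1)^{i+1}` for `j < i`, which is stated for 1-indexed
labels). -/
def csign (i j : ℕ) : ℝ := if i < j then (-1) ^ (j + 1) else (-1) ^ i

/-- The value of the coboundary operator `δ_o` on a single decorated graph: the signed sum
of the contractions of all regular edges and all arcs.  (On graphs that are `0` in `D_o`
by the relations, the operator is extended by `0`.) -/
noncomputable def deltaGen (g : OddGraph) : OddGraph →₀ ℝ :=
  if g.IsValid ∧ ¬g.hasDoubleEdge ∧ ¬g.hasInternalLoop then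
    ((g.edges.filter fun e => g.isRegular e).map fun e =>
        csign e.src e.tgt • Finsupp.single (g.contractEdge e) (1 : ℝ)).sum
      + (g.arcs.map fun p =>
          csign p.1 p.2 • Finsupp.single (g.contractArc p.1 p.2) (1 : ℝ)).sum
  else 0

/-- The coboundary operator `δ_o` on the free vector space generated by decorated graphs
of odd type. -/
noncomputable def deltaFree : (OddGraph →₀ ℝ) →ₗ[ℝ] (OddGraph →₀ ℝ) :=
  Finsupp.lsum ℝ fun g => LinearMap.toSpanSingleton ℝ (OddGraph →₀ ℝ) (deltaGen g)

/-- Relabelling of vertices by a permutation `π` of the internal labels and a cyclic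
rotation by `r` of the external labels. -/
def permVertex (ve vi : ℕ) (π : Equiv.Perm (Fin vi)) (r : ℕ) (v : ℕ) : ℕ :=
  if v < ve then (v + r) % ve
  else if h : v - ve < vi then ve + (π ⟨v - ve, h⟩ : Fin vi) else v

/-- The action of a vertex relabelling on a decorated edge. -/
def permOEdge (ve vi : ℕ) (π : Equiv.Perm (Fin vi)) (r : ℕ) (e : OEdge) : OEdge :=
  ⟨permVertex ve vi π r e.src, permVertex ve vi π r e.tgt, e.lp⟩

/-- Reversal of the orientation of an edge (for small loops: reversal of the half-edge
ordering relative to the orientation). -/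
def flipOEdge (e : OEdge) : OEdge :=
  if e.src = e.tgt then ⟨e.src, e.tgt, !e.lp⟩ else ⟨e.tgt, e.src, e.lp⟩

/-- `OddRel g g' ε` holds when `g'` is obtained from `g` by a permutation of the internal
labels, a cyclic permutation of the external labels, and reversals of edge orientations
and of half-edge orderings of external small loops; `ε = (-1)^{π₁+π₂+l+s}` is the
corresponding sign. -/
def OddRel (g g' : OddGraph) (ε : ℝ) : Prop :=
  g'.ve = g.ve ∧ g'.vi = g.vi ∧
  ∃ (π : Equiv.Perm (Fin g.vi)) (r : ℕ) (F : Multiset (OEdge × Bool)),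
    F.map Prod.fst = g.edges.map (permOEdge g.ve g.vi π r) ∧
    g'.edges = F.map (fun p => if p.2 then flipOEdge p.1 else p.1) ∧
    ε = ((Equiv.Perm.sign π : ℤ) : ℝ)
        * ((Equiv.Perm.sign (finRotate g.ve ^ r) : ℤ) : ℝ)
        * (-1) ^ Multiset.card (F.filter fun p => p.2 = true)

/-- The defining relations of `D_o`: non-graphs are `0`, graphs with a double edge are
`0`, graphs with an internal small loop are `0`, and graphs differing only in the
decoration are identified up to the sign `(-1)^{π₁+π₂+l+s}`. -/
def oddRelSet : Set (OddGraph →₀ ℝ) :=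
  {x | ∃ g : OddGraph, ¬g.IsValid ∧ x = Finsupp.single g 1} ∪
  {x | ∃ g : OddGraph, g.hasDoubleEdge ∧ x = Finsupp.single g 1} ∪
  {x | ∃ g : OddGraph, g.hasInternalLoop ∧ x = Finsupp.single g 1} ∪
  {x | ∃ g g' ε, OddRel g g' ε ∧ x = Finsupp.single g 1 - ε • Finsupp.single g' 1}

/-- The submodule of relations. -/
noncomputable def oddRelations : Submodule ℝ (OddGraph →₀ ℝ) := Submodule.span ℝ oddRelSet

/-- The odd graph complex `D_o`, the quotient of the free vector space on decorated graphs
of odd type by the relations. -/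
abbrev Do := (OddGraph →₀ ℝ) ⧸ oddRelations

/-- The subspace `D_o^{k,m}` of `D_o` spanned by the graphs of order `k` and degree `m`. -/
noncomputable def oddPiece (k m : ℤ) : Submodule ℝ Do :=
  Submodule.span ℝ {x | ∃ g : OddGraph,
    g.IsValid ∧ g.ordZ = k ∧ g.degZ = m ∧
    x = Submodule.Quotient.mk (p := oddRelations) (Finsupp.single g 1)}

/-!
Contracting two pairs of vertices in either order induces the same map of labels, while the two
products of contraction signs are opposite. The terms of `δ_o ∘ δ_o` therefore cancel in pairs,
apart from those which involve a triangle. In a triangle of three edges the first contraction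
produces a double edge, so all the terms vanish. In a triangle of an arc and two regular edges,
contracting the arc first produces a double edge; the two terms in which one of the edges is
contracted before the arc cancel each other, because the other edge ends up as an external loop at
the merged vertex, with opposite half-edge orderings.

The compatibility of `δ_o` with the relations only has to be checked on generators of the changes
of decoration: transpositions of adjacent internal labels, the rotation of the external labels by
one, and the reversal of a single edge.
-/

/-! ### Contraction of labels and of edges -/

theorem mergeMap_comm (i j : ℕ) : mergeMap i j = mergeMap j i := by
  funext x
  simp only [mergeMap, min_comm i j, max_comm i j, or_comm (a := x = i)]

theorem mergeMap_of_lt {i j : ℕ} (h : i < j) (x : ℕ) :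
    mergeMap i j x = if x = j then i else if j < x then x - 1 else x := by
  unfold mergeMap
  rw [min_eq_left h.le, max_eq_right h.le]
  grind

theorem mergeMap_eq_iff {i j : ℕ} (h : i ≠ j) {x y : ℕ} :
    mergeMap i j x = mergeMap i j y ↔ x = y ∨ ((x = i ∨ x = j) ∧ (y = i ∨ y = j)) := by
  wlog hlt : i < j generalizing i j
  · rw [mergeMap_comm, this h.symm (by omega), or_comm (a := x = j), or_comm (a := y = j)]
  rw [mergeMap_of_lt hlt, mergeMap_of_lt hlt]
  grind

theorem mergeMap_left_eq_right (i j : ℕ) : mergeMap i j i = mergeMap i j j := by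
  simp [mergeMap]

theorem mergeMap_lt {i j x n : ℕ} (h : i ≠ j) (hi : i < n) (hj : j < n) (hx : x < n) :
    mergeMap i j x < n - 1 := by
  unfold mergeMap
  grind

theorem mergeMap_lt_iff {i j n : ℕ} (h : ¬(i < n ∧ j < n)) (x : ℕ) :
    mergeMap i j x < n ↔ x < n ∨ ((x = i ∨ x = j) ∧ (i < n ∨ j < n)) := by
  unfold mergeMap
  grind

theorem mergeMap_lt_sub_one_iff {i j n : ℕ} (hij : i ≠ j) (hi : i < n) (hj : j < n) (x : ℕ) :
    mergeMap i j x < n - 1 ↔ x < n := by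
  unfold mergeMap
  grind

theorem mergeMap_eq_self {i j n : ℕ} (h : ¬(i < n ∧ j < n)) {x : ℕ} (hx : x < n) :
    mergeMap i j x = x := by
  unfold mergeMap
  grind

theorem exists_mergeMap_eq {i j n : ℕ} (hi : i < n) (hj : j < n) {y : ℕ} (hy : y < n - 1) :
    ∃ x < n, mergeMap i j x = y := by
  by_cases h : y < max i j
  · exact ⟨y, by unfold mergeMap; grind⟩
  · exact ⟨y + 1, by unfold mergeMap; grind⟩

theorem csign_of_lt {i j : ℕ} (h : i < j) : csign i j = (-1) ^ (j + 1) := if_pos h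

theorem csign_of_gt {i j : ℕ} (h : j < i) : csign i j = (-1) ^ i := if_neg h.not_gt

theorem csign_swap {i j : ℕ} (h : i ≠ j) : csign j i = -csign i j := by
  rcases lt_or_gt_of_ne h with h | h <;> simp [csign_of_lt h, csign_of_gt h, pow_succ]

/-- The two orders of contracting the pairs of vertices `(i, j)` and `(k, l)` induce the same map
of labels, and opposite signs. -/
def MergeCommute (i j k l : ℕ) : Prop :=
  (∀ x, mergeMap (mergeMap i j k) (mergeMap i j l) (mergeMap i j x) =
      mergeMap (mergeMap k l i) (mergeMap k l j) (mergeMap k l x)) ∧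
    csign i j * csign (mergeMap i j k) (mergeMap i j l) =
      -(csign k l * csign (mergeMap k l i) (mergeMap k l j))

namespace MergeCommute

variable {i j k l : ℕ}

theorem symm (h : MergeCommute i j k l) : MergeCommute k l i j :=
  ⟨fun x => (h.1 x).symm, by rw [h.2, neg_neg]⟩

theorem swap_left (h : MergeCommute i j k l) (hij : i ≠ j) (hkl : k ≠ l)
    (hne : s(i, j) ≠ s(k, l)) : MergeCommute j i k l := by
  have hne' : mergeMap k l i ≠ mergeMap k l j := by
    rw [Ne, mergeMap_eq_iff hkl]
    grind
  refine ⟨fun x => ?_, ?_⟩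
  · simpa only [mergeMap_comm j i, mergeMap_comm (mergeMap k l j)] using h.1 x
  · simp only [mergeMap_comm j i, csign_swap hij, csign_swap hne', neg_mul, h.2, mul_neg]

theorem of_lt (hij : i < j) (hkl : k < l) (hjl : j < l) : MergeCommute i j k l := by
  have hi : mergeMap k l i = i := by rw [mergeMap_of_lt hkl]; grind
  have hj : mergeMap k l j = j := by rw [mergeMap_of_lt hkl]; grind
  have hl : mergeMap i j l = l - 1 := by rw [mergeMap_of_lt hij]; grind
  have hk : mergeMap i j k < l - 1 := by rw [mergeMap_of_lt hij]; grind
  refine ⟨fun x => ?_, ?_⟩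
  · rw [hi, hj, hl, mergeMap_of_lt hk]
    simp only [mergeMap_of_lt hij, mergeMap_of_lt hkl]
    split_ifs <;> omega
  · obtain ⟨m, rfl⟩ := Nat.exists_eq_add_one_of_ne_zero (Nat.ne_zero_of_lt hjl)
    rw [hi, hj, hl, csign_of_lt hk, csign_of_lt hij, csign_of_lt hkl, Nat.add_sub_cancel]
    ring

theorem of_lt_of_lt (hik : i < k) (hkj : k < j) : MergeCommute i j k j := by
  have hij := hik.trans hkj
  have hi : mergeMap k j i = i := by rw [mergeMap_of_lt hkj]; grind
  have hj : mergeMap k j j = k := by rw [mergeMap_of_lt hkj]; grind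
  have hj' : mergeMap i j j = i := by rw [mergeMap_of_lt hij]; grind
  have hk : mergeMap i j k = k := by rw [mergeMap_of_lt hij]; grind
  refine ⟨fun x => ?_, ?_⟩
  · rw [hi, hj, hj', hk, mergeMap_comm k i]
    simp only [mergeMap_of_lt hij, mergeMap_of_lt hik, mergeMap_of_lt hkj]
    split_ifs <;> omega
  · rw [hi, hj, hj', hk, csign_of_gt hik, csign_of_lt hik, csign_of_lt hkj, csign_of_lt hij]
    ring

end MergeCommute

theorem mergeCommute {i j k l : ℕ} (hij : i ≠ j) (hkl : k ≠ l) (hne : s(i, j) ≠ s(k, l)) :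
    MergeCommute i j k l := by
  wlog hlt : i < j generalizing i j
  · have hne' : s(j, i) ≠ s(k, l) := by rwa [Sym2.eq_swap]
    exact (this hij.symm hne' (by omega)).swap_left hij.symm hkl hne'
  wlog hlt' : k < l generalizing k l
  · have hne' : s(i, j) ≠ s(l, k) := by rwa [Sym2.eq_swap (a := l)]
    exact ((this hkl.symm hne' (by omega)).symm.swap_left hkl.symm hij hne'.symm).symm
  wlog hle : j ≤ l generalizing i j k l
  · exact (this hkl hlt' hij hne.symm hlt (by omega)).symm
  rcases hle.lt_or_eq with hjl | rfl
  · exact .of_lt hlt hlt' hjl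
  rcases lt_trichotomy i k with hik | rfl | hki
  · exact .of_lt_of_lt hik hlt'
  · exact absurd rfl hne
  · exact (MergeCommute.of_lt_of_lt hki hlt).symm

theorem OEdge.ext' {e f : OEdge} (hsrc : e.src = f.src) (htgt : e.tgt = f.tgt)
    (hlp : e.lp = f.lp) : e = f := by
  cases e; cases f; simp_all

namespace OEdge

variable {i j k l : ℕ}

/-- The unordered pair of end-points of an edge. -/
def ends (e : OEdge) : Sym2 ℕ := s(e.src, e.tgt)

/-- The action of a map of vertex labels on a decorated edge. -/
def relabel (φ : ℕ → ℕ) (e : OEdge) : OEdge := ⟨φ e.src, φ e.tgt, e.lp⟩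

/-- The effect on an edge of contracting the oriented pair of vertices `(i, j)`. When `(i, j)` is
a regular edge this is the relabelling by `mergeMap i j`, because no other edge joins `i` and `j`;
when it is an arc, an edge joining `i` and `j` is a short chord and becomes a small loop. -/
def contract (i j : ℕ) (f : OEdge) : OEdge :=
  if f.src = i ∧ f.tgt = j then ⟨min i j, min i j, false⟩
  else if f.src = j ∧ f.tgt = i then ⟨min i j, min i j, true⟩
  else ⟨mergeMap i j f.src, mergeMap i j f.tgt, f.lp⟩

theorem ends_eq_iff {e f : OEdge} :
    e.ends = f.ends ↔ e.src = f.src ∧ e.tgt = f.tgt ∨ e.src = f.tgt ∧ e.tgt = f.src :=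
  Sym2.eq_iff

theorem src_contract (i j : ℕ) (f : OEdge) : (f.contract i j).src = mergeMap i j f.src := by
  unfold contract mergeMap
  grind

theorem tgt_contract (i j : ℕ) (f : OEdge) : (f.contract i j).tgt = mergeMap i j f.tgt := by
  unfold contract mergeMap
  grind

theorem lp_contract (i j : ℕ) (f : OEdge) : (f.contract i j).lp =
    if f.src = i ∧ f.tgt = j then false else if f.src = j ∧ f.tgt = i then true else f.lp := by
  unfold contract
  grind

theorem ends_contract (i j : ℕ) (f : OEdge) :
    (f.contract i j).ends = f.ends.map (mergeMap i j) := by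
  rw [ends, ends, Sym2.map_mk, src_contract, tgt_contract]

theorem ends_relabel (φ : ℕ → ℕ) (f : OEdge) : (f.relabel φ).ends = f.ends.map φ := rfl

theorem relabel_id : relabel id = id := rfl

theorem relabel_injective {φ : ℕ → ℕ} (hφ : φ.Injective) : (relabel φ).Injective := by
  rintro ⟨a, b, l⟩ ⟨a', b', l'⟩ h
  simpa [relabel, hφ.eq_iff] using h

theorem contract_of_ends_ne {f : OEdge} (h : f.ends ≠ s(i, j)) :
    f.contract i j = f.relabel (mergeMap i j) := by
  rw [ends, Ne, Sym2.eq_iff] at h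
  rw [contract, if_neg (by tauto), if_neg (by tauto), relabel]

theorem src_contract_eq_tgt_contract_iff (hij : i ≠ j) {f : OEdge} :
    (f.contract i j).src = (f.contract i j).tgt ↔ f.src = f.tgt ∨ f.ends = s(i, j) := by
  rw [src_contract, tgt_contract, mergeMap_eq_iff hij, ends, Sym2.eq_iff]
  grind

theorem contract_comm {f : OEdge} (h : f.ends ≠ s(i, j)) : f.contract j i = f.contract i j := by
  rw [contract_of_ends_ne h, contract_of_ends_ne (Sym2.eq_swap ▸ h), mergeMap_comm]

theorem contract_contract (hij : i ≠ j) (hkl : k ≠ l) (hne : s(i, j) ≠ s(k, l)) {f : OEdge}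
    (hf : (f.contract i j).ends ≠ s(mergeMap i j k, mergeMap i j l) ∨ i ≠ k ∧ j ≠ l) :
    (f.contract i j).contract (mergeMap i j k) (mergeMap i j l) =
      (f.contract k l).contract (mergeMap k l i) (mergeMap k l j) := by
  refine ext' ?_ ?_ ?_
  · simp only [src_contract, (mergeCommute hij hkl hne).1]
  · simp only [tgt_contract, (mergeCommute hij hkl hne).1]
  · simp only [ends, Ne, Sym2.eq_iff, src_contract, tgt_contract, mergeMap_eq_iff hij] at hf hne
    simp only [lp_contract, src_contract, tgt_contract, mergeMap_eq_iff hij, mergeMap_eq_iff hkl]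
    grind

/-- The edges `e`, `f`, `h` form a triangle, whichever of its sides is contracted first. -/
theorem ends_contract_eq_rotate {e f h : OEdge} (he : e.src ≠ e.tgt) (hf : f.src ≠ f.tgt)
    (hef : e.ends ≠ f.ends) (hfh : f.ends ≠ h.ends)
    (heq : (h.contract e.src e.tgt).ends = (f.contract e.src e.tgt).ends) :
    (h.contract f.src f.tgt).ends = (e.contract f.src f.tgt).ends := by
  simp only [ends_eq_iff, Ne, src_contract, tgt_contract, mergeMap_eq_iff he,
    mergeMap_eq_iff hf] at *
  grind

theorem flip_of_ne {f : OEdge} (h : f.src ≠ f.tgt) : flipOEdge f = ⟨f.tgt, f.src, f.lp⟩ := if_neg h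

theorem ends_flip (f : OEdge) : (flipOEdge f).ends = f.ends := by
  unfold flipOEdge
  split_ifs
  exacts [rfl, Sym2.eq_swap]

theorem flip_flip (f : OEdge) : flipOEdge (flipOEdge f) = f := by
  by_cases h : f.src = f.tgt <;> cases f <;> simp_all [flipOEdge, eq_comm]

theorem contract_flip (hij : i ≠ j) (f : OEdge) :
    (flipOEdge f).contract i j = flipOEdge (f.contract i j) := by
  unfold flipOEdge
  simp only [src_contract, tgt_contract, mergeMap_eq_iff hij]
  split_ifs <;> refine ext' ?_ ?_ ?_ <;> simp only [src_contract, tgt_contract, lp_contract] <;>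
    grind [mergeMap]

theorem contract_relabel {φ ψ : ℕ → ℕ} (hφ : φ.Injective)
    (h : ∀ x, mergeMap (φ i) (φ j) (φ x) = ψ (mergeMap i j x)) (f : OEdge) :
    (f.relabel φ).contract (φ i) (φ j) = (f.contract i j).relabel ψ := by
  refine ext' ?_ ?_ ?_
  · simp [relabel, src_contract, h]
  · simp [relabel, tgt_contract, h]
  · simp [relabel, lp_contract, hφ.eq_iff]

theorem ends_ne_of_mem_erase {s : Multiset OEdge} (hs : (s.map ends).Nodup) {e f : OEdge}
    (he : e ∈ s) (hf : f ∈ s.erase e) : f.ends ≠ e.ends := by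
  rw [← Multiset.cons_erase he, Multiset.map_cons, Multiset.nodup_cons] at hs
  exact fun h => hs.1 (Multiset.mem_map.2 ⟨f, hf, h⟩)

theorem mem_erase_iff_of_nodup_ends {s : Multiset OEdge} (hs : (s.map ends).Nodup) {e f : OEdge}
    (he : e ∈ s) : f ∈ s.erase e ↔ f.ends ≠ e.ends ∧ f ∈ s := by
  refine ⟨fun hf => ⟨ends_ne_of_mem_erase hs he hf, Multiset.mem_of_mem_erase hf⟩, ?_⟩
  rintro ⟨hne, hf⟩
  exact (Multiset.mem_erase_of_ne (by rintro rfl; exact hne rfl)).2 hf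

end OEdge

namespace OddGraph

theorem hasDoubleEdge_iff {g : OddGraph} :
    g.hasDoubleEdge ↔ ¬(g.edges.map OEdge.ends).Nodup := by
  constructor
  · rintro ⟨e, he, f, hf, h⟩ hs
    exact OEdge.ends_ne_of_mem_erase hs he hf (OEdge.ends_eq_iff.2 h)
  · rw [Multiset.nodup_iff_ne_cons_cons]
    push Not
    rintro ⟨b, t, h⟩
    obtain ⟨e, he, heb, ht⟩ := (Multiset.map_eq_cons _ _ _ _).2 h
    obtain ⟨f, hf, hfb⟩ := Multiset.mem_map.1 (ht ▸ Multiset.mem_cons_self b t)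
    exact ⟨e, he, f, hf, OEdge.ends_eq_iff.1 (hfb.trans heb.symm)⟩

/-- The class of a decorated graph in the odd graph complex. -/
noncomputable def cls (g : OddGraph) : Do :=
  Submodule.Quotient.mk (p := oddRelations) (Finsupp.single g 1)

/-- The class of the coboundary of a decorated graph. -/
noncomputable def delta (g : OddGraph) : Do :=
  Submodule.Quotient.mk (p := oddRelations) (deltaGen g)

/-- The graphs which are not set to zero by the relations on non-graphs, double edges and internal
loops. -/
def IsSimple (g : OddGraph) : Prop := g.IsValid ∧ ¬g.hasDoubleEdge ∧ ¬g.hasInternalLoop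

theorem IsSimple.nodup_ends {g : OddGraph} (hg : g.IsSimple) : (g.edges.map OEdge.ends).Nodup :=
  not_not.1 (hasDoubleEdge_iff.not.1 hg.2.1)

theorem cls_eq_zero_of_not_isSimple {g : OddGraph} (h : ¬g.IsSimple) : g.cls = 0 := by
  refine (Submodule.Quotient.mk_eq_zero _).2 (Submodule.subset_span ?_)
  by_cases hvalid : g.IsValid
  · by_cases hdouble : g.hasDoubleEdge
    · exact .inl (.inl (.inr ⟨g, hdouble, rfl⟩))
    · exact .inl (.inr ⟨g, by_contra fun hloop => h ⟨hvalid, hdouble, hloop⟩, rfl⟩)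
  · exact .inl (.inl (.inl ⟨g, hvalid, rfl⟩))

theorem cls_eq_zero_of_not_nodup_ends {g : OddGraph} (h : ¬(g.edges.map OEdge.ends).Nodup) :
    g.cls = 0 :=
  cls_eq_zero_of_not_isSimple fun hg => h hg.nodup_ends

theorem cls_eq_smul {g g' : OddGraph} {ε : ℝ} (h : OddRel g g' ε) : g.cls = ε • g'.cls :=
  (Submodule.Quotient.eq _).2 (Submodule.subset_span (.inr ⟨g, g', ε, h, rfl⟩))

theorem delta_eq_zero {g : OddGraph} (h : ¬g.IsSimple) : g.delta = 0 := by
  rw [delta, deltaGen, if_neg (by exact h), Submodule.Quotient.mk_zero]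

end OddGraph

/-- The cyclic rotation by one of the external labels `0, …, n - 1`; the other labels are fixed. -/
def rotateLabel (n : ℕ) : Equiv.Perm ℕ where
  toFun v := if v + 1 < n then v + 1 else if v + 1 = n then 0 else v
  invFun v := if v = 0 then n - 1 else if v < n then v - 1 else v
  left_inv v := by grind
  right_inv v := by grind

theorem rotateLabel_apply (n v : ℕ) :
    rotateLabel n v = if v + 1 < n then v + 1 else if v + 1 = n then 0 else v := rfl

theorem rotateLabel_lt_iff {n v : ℕ} : rotateLabel n v < n ↔ v < n := by
  rw [rotateLabel_apply]
  grind

/-- The external vertices at which an arc starts, when there are `n` external vertices: a circle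
with a single external vertex has no arcs. -/
def arcStarts (n : ℕ) : Finset ℕ := if 2 ≤ n then Finset.range n else ∅

theorem mem_arcStarts {n i : ℕ} : i ∈ arcStarts n ↔ 2 ≤ n ∧ i < n := by
  unfold arcStarts
  split_ifs with h <;> simp [h]

theorem rotateLabel_ne {n i : ℕ} (hi : i ∈ arcStarts n) : i ≠ rotateLabel n i := by
  rw [mem_arcStarts] at hi
  rw [rotateLabel_apply]
  grind

theorem OddGraph.sum_arcs {M : Type*} [AddCommMonoid M] (g : OddGraph) (T : ℕ × ℕ → M) :
    (g.arcs.map T).sum = ∑ i ∈ arcStarts g.ve, T (i, rotateLabel g.ve i) := by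
  unfold arcs arcStarts
  split_ifs with h
  · obtain ⟨n, hn⟩ := Nat.exists_eq_add_of_le' (Nat.one_le_of_lt h)
    have hlast : rotateLabel (n + 1) n = 0 := by simp [rotateLabel_apply]
    have hinit : ∀ i ∈ Finset.range n, rotateLabel (n + 1) i = i + 1 := fun i hi => by
      simp [rotateLabel_apply, Finset.mem_range.1 hi]
    rw [hn, Finset.sum_range_succ, hlast, Finset.sum_congr rfl fun i hi => by rw [hinit i hi]]
    simp [Function.comp_def, Finset.sum_eq_multiset_sum, Multiset.range]
  · simp

namespace OEdge

/-- A regular edge of a graph whose external vertices are the labels less than `n`. -/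
def IsRegular (n : ℕ) (e : OEdge) : Prop := e.src ≠ e.tgt ∧ ¬(e.src < n ∧ e.tgt < n)

end OEdge

namespace OddGraph

/-- The class of the graph obtained from an edge set `s` by identifying the vertices `i` and `j`,
weighted by the contraction sign; the numbers `ve`, `vi` are those of the resulting graph. -/
noncomputable def signedContract (ve vi : ℕ) (s : Multiset OEdge) (i j : ℕ) : Do :=
  csign i j • cls ⟨ve, vi, s.map (OEdge.contract i j)⟩

theorem delta_eq {g : OddGraph} (hg : g.IsSimple) :
    g.delta =
      ((g.edges.filter (OEdge.IsRegular g.ve)).map fun e =>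
        signedContract g.ve (g.vi - 1) (g.edges.erase e) e.src e.tgt).sum +
      ∑ i ∈ arcStarts g.ve, signedContract (g.ve - 1) g.vi g.edges i (rotateLabel g.ve i) := by
  rw [delta, deltaGen, if_pos (by exact hg), sum_arcs, ← Submodule.mkQ_apply, map_add, map_sum,
    map_multiset_sum, Multiset.map_map]
  congr 2
  refine Multiset.map_congr rfl fun e he => ?_
  have hcontract : g.contractEdge e =
      ⟨g.ve, g.vi - 1, (g.edges.erase e).map (OEdge.contract e.src e.tgt)⟩ := by
    refine congrArg (OddGraph.mk _ _) (Multiset.map_congr rfl fun f hf => ?_)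
    exact (OEdge.contract_of_ends_ne
      (OEdge.ends_ne_of_mem_erase hg.nodup_ends (Multiset.mem_filter.1 he).1 hf)).symm
  rw [Function.comp_apply, hcontract, map_smul]
  rfl

end OddGraph

section PermVertex

variable (ve vi : ℕ)

theorem permVertex_one_zero : permVertex ve vi 1 0 = id := by
  funext v
  unfold permVertex
  split_ifs with hext hint
  · simp [Nat.mod_eq_of_lt hext]
  · simp only [Equiv.Perm.one_apply, id_eq]
    omega
  · rfl

theorem permVertex_one_one : permVertex ve vi 1 1 = rotateLabel ve := by
  funext v
  rw [rotateLabel_apply]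
  unfold permVertex
  split_ifs with hext hlt hlast <;> try grind
  · exact Nat.mod_eq_of_lt hlt
  · rw [hlast, Nat.mod_self]
  · simp only [Equiv.Perm.one_apply]
    omega

theorem permVertex_swap {vi : ℕ} (k l : Fin vi) :
    permVertex ve vi (Equiv.swap k l) 0 = Equiv.swap (ve + k : ℕ) (ve + l) := by
  funext v
  simp only [permVertex, Equiv.swap_apply_def, Fin.ext_iff]
  split_ifs <;> first | omega | simp_all [Nat.mod_eq_of_lt]

theorem permVertex_mul (π π' : Equiv.Perm (Fin vi)) :
    permVertex ve vi (π * π') 0 = permVertex ve vi π 0 ∘ permVertex ve vi π' 0 := by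
  funext v
  unfold permVertex
  by_cases hext : v < ve
  · simp [hext, Nat.mod_eq_of_lt hext]
  · by_cases hint : v - ve < vi <;> simp [hext, hint]

theorem permVertex_add_one (π : Equiv.Perm (Fin vi)) (r : ℕ) :
    permVertex ve vi π (r + 1) = permVertex ve vi π r ∘ rotateLabel ve := by
  rw [← permVertex_one_one ve vi]
  funext v
  unfold permVertex
  by_cases hext : v < ve
  · have hmod : (v + 1) % ve < ve := Nat.mod_lt _ (Nat.zero_lt_of_lt hext)
    simp [hext, hmod, add_assoc, add_comm r]
  · by_cases hint : v - ve < vi <;> simp [hext, hint]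

theorem permOEdge_eq_relabel (π : Equiv.Perm (Fin vi)) (r : ℕ) :
    permOEdge ve vi π r = OEdge.relabel (permVertex ve vi π r) := rfl

end PermVertex

namespace OddGraph

variable (ve : ℕ) {vi : ℕ}

theorem cls_perm (s : Multiset OEdge) (π : Equiv.Perm (Fin vi)) (r : ℕ) :
    cls ⟨ve, vi, s⟩ = (((Equiv.Perm.sign π : ℤ) : ℝ) *
      ((Equiv.Perm.sign (finRotate ve ^ r) : ℤ) : ℝ)) •
        cls ⟨ve, vi, s.map (OEdge.relabel (permVertex ve vi π r))⟩ := by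
  refine cls_eq_smul ⟨rfl, rfl, π, r,
    s.map fun e => (e.relabel (permVertex ve vi π r), false), ?_, ?_, ?_⟩ <;>
    simp [Multiset.filter_map, permOEdge_eq_relabel]

theorem cls_swap {k : ℕ} (hk : ve ≤ k) (hk' : k + 1 < ve + vi) (s : Multiset OEdge) :
    cls ⟨ve, vi, s⟩ =
      (-1 : ℝ) • cls ⟨ve, vi, s.map (OEdge.relabel (Equiv.swap k (k + 1)))⟩ := by
  obtain ⟨k, rfl⟩ := Nat.exists_eq_add_of_le hk
  have hswap := cls_perm ve s (Equiv.swap ⟨k, by omega⟩ ⟨k + 1, by omega⟩ : Equiv.Perm (Fin vi)) 0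
  rw [permVertex_swap, Equiv.Perm.sign_swap (by simp)] at hswap
  simpa [add_assoc] using hswap

variable (vi)

theorem cls_rotate (s : Multiset OEdge) :
    cls ⟨ve, vi, s⟩ =
      ((-1 : ℝ) ^ (ve - 1)) • cls ⟨ve, vi, s.map (OEdge.relabel (rotateLabel ve))⟩ := by
  have hrotate := cls_perm ve s (1 : Equiv.Perm (Fin vi)) 1
  rw [permVertex_one_one] at hrotate
  cases ve <;> simpa [sign_finRotate] using hrotate

theorem cls_flip (a : OEdge) (s : Multiset OEdge) :
    cls ⟨ve, vi, flipOEdge a ::ₘ s⟩ = -cls ⟨ve, vi, a ::ₘ s⟩ := by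
  rw [eq_neg_iff_add_eq_zero, add_comm, add_eq_zero_iff_eq_neg, ← neg_one_smul ℝ (cls _)]
  refine cls_eq_smul ⟨rfl, rfl, 1, 0, (a, true) ::ₘ s.map fun e => (e, false), ?_, ?_, ?_⟩ <;>
    simp [permOEdge_eq_relabel, permVertex_one_zero, OEdge.relabel_id, Multiset.filter_map]

end OddGraph

/-! ### Quotients of graphs -/

namespace OddGraph

/-- The map `m` of labels describes `g'` as a quotient of `g`, in a way that preserves simplicity
up to the appearance of double edges. Relabelling, edge reversal and contraction give quotients. -/
structure IsQuotientMap (m : ℕ → ℕ) (g g' : OddGraph) : Prop where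
  map_lt_nv : ∀ x < g.nv, m x < g'.nv
  map_lt_ve : ∀ x < g.ve, m x < g'.ve
  exists_vertex : ∀ y < g'.nv, ∃ x < g.nv, m x = y ∧ (x < g.ve ↔ y < g'.ve) ∧
    g.valence x ≤ g'.valence y
  exists_edge : ∀ f ∈ g'.edges, ∃ e ∈ g.edges, f.ends = e.ends.map m ∧
    (f.src ≠ f.tgt → f.lp = e.lp) ∧ (f.src = f.tgt → e.src = e.tgt ∨ f.src < g'.ve)
  map_edge : ∀ e ∈ g.edges, m e.src = m e.tgt ∨ ∃ f ∈ g'.edges, f.ends = e.ends.map m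

theorem adj_iff {g : OddGraph} {a b : ℕ} :
    g.adj a b ↔ (∃ e ∈ g.edges, e.ends = s(a, b)) ∨ (a < g.ve ∧ b < g.ve) := by
  simp only [adj, OEdge.ends, Sym2.eq_iff]

namespace IsQuotientMap

variable {m : ℕ → ℕ} {g g' : OddGraph}

theorem map_eq_or_adj (h : IsQuotientMap m g g') {a b : ℕ} (hab : g.adj a b) :
    m a = m b ∨ g'.adj (m a) (m b) := by
  simp only [adj_iff] at *
  rcases hab with ⟨e, he, hends⟩ | hab
  · rcases h.map_edge e he with heq | ⟨f, hf, hf'⟩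
    · rcases Sym2.eq_iff.1 hends with ⟨rfl, rfl⟩ | ⟨rfl, rfl⟩
      exacts [.inl heq, .inl heq.symm]
    · exact .inr (.inl ⟨f, hf, by rw [hf', hends, Sym2.map_mk]⟩)
  · exact .inr (.inr ⟨h.map_lt_ve _ hab.1, h.map_lt_ve _ hab.2⟩)

theorem connected (h : IsQuotientMap m g g') (hg : g.Connected) : g'.Connected := by
  intro a b ha hb
  obtain ⟨a, ha', rfl, -⟩ := h.exists_vertex a ha
  obtain ⟨b, hb', rfl, -⟩ := h.exists_vertex b hb
  refine Relation.ReflTransGen.lift' m (fun a b hab => ?_) _ _ (hg a b ha' hb')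
  change Relation.ReflTransGen g'.adj (m a) (m b)
  rcases h.map_eq_or_adj hab with heq | hadj
  · rw [heq]
  · exact .single hadj

theorem isValid (h : IsQuotientMap m g g') (hg : g.IsValid) : g'.IsValid := by
  obtain ⟨hlt, hlp, hint, hext, hconn⟩ := hg
  refine ⟨fun f hf => ?_, fun f hf hne => ?_, fun y hy hy' => ?_, fun y hy => ?_, h.connected hconn⟩
  · obtain ⟨e, he, hends, -⟩ := h.exists_edge f hf
    have hsrc := h.map_lt_nv _ (hlt e he).1
    have htgt := h.map_lt_nv _ (hlt e he).2
    rcases Sym2.eq_iff.1 hends with ⟨h1, h2⟩ | ⟨h1, h2⟩ <;> rw [h1, h2]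
    exacts [⟨hsrc, htgt⟩, ⟨htgt, hsrc⟩]
  · obtain ⟨e, he, hends, hlp', -⟩ := h.exists_edge f hf
    rw [hlp' hne]
    refine hlp e he fun heq => hne ?_
    rcases Sym2.eq_iff.1 hends with ⟨h1, h2⟩ | ⟨h1, h2⟩ <;> rw [h1, h2, heq]
  · obtain ⟨x, hx, -, hxy, hval⟩ := h.exists_vertex y hy'
    exact (hint x (not_lt.1 fun hlt => hy.not_gt (hxy.1 hlt)) hx).trans hval
  · obtain ⟨x, -, -, hxy, hval⟩ := h.exists_vertex y (Nat.lt_add_right _ hy)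
    exact (hext x (hxy.2 hy)).trans hval

theorem not_hasInternalLoop (h : IsQuotientMap m g g') (hg : ¬g.hasInternalLoop) :
    ¬g'.hasInternalLoop := by
  rintro ⟨f, hf, hloop, hint⟩
  obtain ⟨e, he, hends, -, hloop'⟩ := h.exists_edge f hf
  have heq := (hloop' hloop).resolve_right hint.not_gt
  refine hg ⟨e, he, heq, not_lt.1 fun hlt => hint.not_gt ?_⟩
  rcases Sym2.eq_iff.1 hends with ⟨h1, -⟩ | ⟨h1, -⟩ <;> rw [h1]
  exacts [h.map_lt_ve _ hlt, h.map_lt_ve _ (heq ▸ hlt)]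

theorem isSimple (h : IsQuotientMap m g g') (hg : g.IsSimple)
    (hg' : (g'.edges.map OEdge.ends).Nodup) : g'.IsSimple :=
  ⟨h.isValid hg.1, fun hd => hasDoubleEdge_iff.1 hd hg', h.not_hasInternalLoop hg.2.2⟩

end IsQuotientMap

theorem valence_mk_cons (ve vi : ℕ) (a : OEdge) (s : Multiset OEdge) (v : ℕ) :
    valence ⟨ve, vi, a ::ₘ s⟩ v =
      (if a.src = v then 1 else 0) + (if a.tgt = v then 1 else 0) + valence ⟨ve, vi, s⟩ v := by
  simp [valence]

section ValenceMap

variable {ve vi ve' vi' : ℕ} {s : Multiset OEdge} {ψ : OEdge → OEdge} {m : ℕ → ℕ}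

theorem valence_le_valence_map (hψ : ∀ e, (ψ e).ends = e.ends.map m) (x : ℕ) :
    valence ⟨ve, vi, s⟩ x ≤ valence ⟨ve', vi', s.map ψ⟩ (m x) := by
  unfold valence
  rw [Multiset.map_map]
  refine Multiset.sum_map_le_sum_map _ _ fun e _ => ?_
  rcases Sym2.eq_iff.1 (hψ e) with ⟨h1, h2⟩ | ⟨h1, h2⟩ <;>
    simp only [Function.comp_apply, h1, h2] <;> grind

theorem valence_add_valence_le_valence_map (hψ : ∀ e, (ψ e).ends = e.ends.map m) {x y : ℕ}
    (hxy : x ≠ y) (h : m x = m y) :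
    valence ⟨ve, vi, s⟩ x + valence ⟨ve, vi, s⟩ y ≤ valence ⟨ve', vi', s.map ψ⟩ (m x) := by
  unfold valence
  rw [Multiset.map_map, ← Multiset.sum_map_add]
  refine Multiset.sum_map_le_sum_map _ _ fun e _ => ?_
  rcases Sym2.eq_iff.1 (hψ e) with ⟨h1, h2⟩ | ⟨h1, h2⟩ <;>
    simp only [Function.comp_apply, h1, h2] <;> grind

end ValenceMap

section Decoration

variable {ve vi : ℕ} {s : Multiset OEdge}

theorem isQuotientMap_relabel (φ : Equiv.Perm ℕ) (hve : ∀ v, φ v < ve ↔ v < ve)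
    (hnv : ∀ v, φ v < ve + vi ↔ v < ve + vi) :
    IsQuotientMap φ ⟨ve, vi, s⟩ ⟨ve, vi, s.map (OEdge.relabel φ)⟩ where
  map_lt_nv x := (hnv x).2
  map_lt_ve x := (hve x).2
  exists_vertex y hy := by
    obtain ⟨x, rfl⟩ := φ.surjective y
    exact ⟨x, (hnv x).1 hy, rfl, (hve x).symm, valence_le_valence_map (OEdge.ends_relabel φ) x⟩
  exists_edge f hf := by
    obtain ⟨e, he, rfl⟩ := Multiset.mem_map.1 hf
    exact ⟨e, he, rfl, fun _ => rfl, fun h => .inl (φ.injective h)⟩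
  map_edge e he := .inr ⟨e.relabel φ, Multiset.mem_map_of_mem _ he, rfl⟩

theorem isSimple_relabel_iff (φ : Equiv.Perm ℕ) (hve : ∀ v, φ v < ve ↔ v < ve)
    (hnv : ∀ v, φ v < ve + vi ↔ v < ve + vi) :
    IsSimple ⟨ve, vi, s.map (OEdge.relabel φ)⟩ ↔ IsSimple ⟨ve, vi, s⟩ := by
  have hrelabel {s : Multiset OEdge} (h : IsSimple ⟨ve, vi, s⟩) (φ : Equiv.Perm ℕ)
      (hve : ∀ v, φ v < ve ↔ v < ve) (hnv : ∀ v, φ v < ve + vi ↔ v < ve + vi) :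
      IsSimple ⟨ve, vi, s.map (OEdge.relabel φ)⟩ := by
    refine (isQuotientMap_relabel φ hve hnv).isSimple h ?_
    have hends : OEdge.ends ∘ OEdge.relabel φ = Sym2.map φ ∘ OEdge.ends := rfl
    rw [Multiset.map_map, hends, ← Multiset.map_map]
    exact h.nodup_ends.map (Sym2.map.injective φ.injective)
  refine ⟨fun h => ?_, fun h => hrelabel h φ hve hnv⟩
  have := hrelabel h φ⁻¹ (fun v => by simpa using (hve (φ⁻¹ v)).symm)
    (fun v => by simpa using (hnv (φ⁻¹ v)).symm)
  simpa [Function.comp_def, OEdge.relabel] using this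

theorem isQuotientMap_flip (a : OEdge) :
    IsQuotientMap id ⟨ve, vi, a ::ₘ s⟩ ⟨ve, vi, flipOEdge a ::ₘ s⟩ where
  map_lt_nv _ := id
  map_lt_ve _ := id
  exists_vertex y hy := by
    refine ⟨y, hy, rfl, Iff.rfl, ?_⟩
    rw [valence_mk_cons, valence_mk_cons, flipOEdge]
    split_ifs <;> simp_all
  exists_edge f hf := by
    rcases Multiset.mem_cons.1 hf with rfl | hf
    · refine ⟨a, Multiset.mem_cons_self a s, OEdge.ends_flip a, ?_⟩
      unfold flipOEdge
      grind
    · exact ⟨f, Multiset.mem_cons_of_mem hf, rfl, fun _ => rfl, .inl⟩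
  map_edge e he := by
    rcases Multiset.mem_cons.1 he with rfl | he
    · exact .inr ⟨flipOEdge e, Multiset.mem_cons_self _ s, OEdge.ends_flip e⟩
    · exact .inr ⟨e, Multiset.mem_cons_of_mem he, rfl⟩

theorem isSimple_flip_iff {a : OEdge} :
    IsSimple ⟨ve, vi, flipOEdge a ::ₘ s⟩ ↔ IsSimple ⟨ve, vi, a ::ₘ s⟩ := by
  have hflip {a : OEdge} (h : IsSimple ⟨ve, vi, a ::ₘ s⟩) :
      IsSimple ⟨ve, vi, flipOEdge a ::ₘ s⟩ :=
    (isQuotientMap_flip a).isSimple h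
      (by simpa only [Multiset.map_cons, OEdge.ends_flip] using h.nodup_ends)
  refine ⟨fun h => ?_, hflip⟩
  simpa only [OEdge.flip_flip] using hflip h

end Decoration

section Contraction

variable {g : OddGraph}

theorem isQuotientMap_contractArc {i j : ℕ} (hij : i ≠ j) (hi : i < g.ve) (hj : j < g.ve) :
    IsQuotientMap (mergeMap i j) g ⟨g.ve - 1, g.vi, g.edges.map (OEdge.contract i j)⟩ where
  map_lt_nv x hx := by
    have hlt := mergeMap_lt hij (Nat.lt_add_right g.vi hi) (Nat.lt_add_right g.vi hj) hx
    simp only [nv]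
    omega
  map_lt_ve _ := mergeMap_lt hij hi hj
  exists_vertex y hy := by
    have hy' : y < g.ve + g.vi - 1 := by
      simp only [nv] at hy
      omega
    obtain ⟨x, hx, rfl⟩ :=
      exists_mergeMap_eq (Nat.lt_add_right g.vi hi) (Nat.lt_add_right g.vi hj) hy'
    exact ⟨x, hx, rfl, (mergeMap_lt_sub_one_iff hij hi hj x).symm,
      valence_le_valence_map (OEdge.ends_contract i j) x⟩
  exists_edge f hf := by
    obtain ⟨e, he, rfl⟩ := Multiset.mem_map.1 hf
    rw [Ne, OEdge.src_contract_eq_tgt_contract_iff hij, not_or]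
    refine ⟨e, he, OEdge.ends_contract i j e, fun hne => ?_, Or.imp_right fun hends => ?_⟩
    · rw [OEdge.contract_of_ends_ne hne.2, OEdge.relabel]
    · rw [OEdge.src_contract]
      refine mergeMap_lt hij hi hj ?_
      rcases Sym2.eq_iff.1 hends with ⟨h, -⟩ | ⟨h, -⟩ <;> rwa [h]
  map_edge e he :=
    .inr ⟨e.contract i j, Multiset.mem_map_of_mem _ he, OEdge.ends_contract i j e⟩

variable {e : OEdge}

/-- The merged vertex of a regular edge has all edge-ends of the two end-points except those of
the edge itself, and one of the end-points is internal, hence has at least three edge-ends. -/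
theorem exists_endpoint_valence_add_two_le (hg : g.IsValid) (he : e ∈ g.edges)
    (hr : e.IsRegular g.ve) :
    ∃ x, (x = e.src ∨ x = e.tgt) ∧ (x < g.ve ↔ e.src < g.ve ∨ e.tgt < g.ve) ∧
      g.valence x + 2 ≤ g.valence e.src + g.valence e.tgt := by
  obtain ⟨hlt, -, hint, -⟩ := hg
  by_cases hsrc : e.src < g.ve
  · have htgt : ¬e.tgt < g.ve := fun h => hr.2 ⟨hsrc, h⟩
    have := hint e.tgt (not_lt.1 htgt) (hlt e he).2
    exact ⟨e.src, .inl rfl, by tauto, by omega⟩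
  · have := hint e.src (not_lt.1 hsrc) (hlt e he).1
    exact ⟨e.tgt, .inr rfl, by tauto, by omega⟩

theorem valence_eq_add_valence_erase (he : e ∈ g.edges) (v : ℕ) :
    g.valence v = (if e.src = v then 1 else 0) + (if e.tgt = v then 1 else 0) +
      valence ⟨g.ve, g.vi, g.edges.erase e⟩ v := by
  rw [← valence_mk_cons, Multiset.cons_erase he]

theorem exists_valence_le_valence_contractEdge (hg : g.IsValid) (he : e ∈ g.edges)
    (hr : e.IsRegular g.ve) {y : ℕ} (hy : y < g.ve + (g.vi - 1)) :
    ∃ x < g.nv, mergeMap e.src e.tgt x = y ∧ (x < g.ve ↔ y < g.ve) ∧ g.valence x ≤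
      valence ⟨g.ve, g.vi - 1, (g.edges.erase e).map (OEdge.contract e.src e.tgt)⟩ y := by
  have hends := hg.1 e he
  have hy' : y < g.nv - 1 := by
    have := hr.2
    simp only [nv] at *
    omega
  obtain ⟨x, hx, rfl⟩ := exists_mergeMap_eq hends.1 hends.2 hy'
  by_cases hxe : x = e.src ∨ x = e.tgt
  · obtain ⟨z, hz, hzve, hzval⟩ := exists_endpoint_valence_add_two_le hg he hr
    have hsrc : mergeMap e.src e.tgt x = mergeMap e.src e.tgt e.src :=
      (mergeMap_eq_iff hr.1).2 (.inr ⟨hxe, .inl rfl⟩)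
    have hadd := valence_add_valence_le_valence_map (ve := g.ve) (vi := g.vi) (ve' := g.ve)
      (vi' := g.vi - 1) (s := g.edges.erase e) (OEdge.ends_contract e.src e.tgt) hr.1
      (mergeMap_left_eq_right _ _)
    refine ⟨z, by grind, (mergeMap_eq_iff hr.1).2 (.inr ⟨hz, hxe⟩), ?_, ?_⟩
    · rw [hzve, mergeMap_lt_iff hr.2]
      grind
    · rw [hsrc]
      have hvalsrc := valence_eq_add_valence_erase he e.src
      have hvaltgt := valence_eq_add_valence_erase he e.tgt
      rw [if_pos rfl, if_neg hr.1.symm] at hvalsrc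
      rw [if_neg hr.1, if_pos rfl] at hvaltgt
      omega
  · rw [not_or] at hxe
    refine ⟨x, hx, rfl, ?_, ?_⟩
    · rw [mergeMap_lt_iff hr.2]
      tauto
    · rw [valence_eq_add_valence_erase he, if_neg (Ne.symm hxe.1), if_neg (Ne.symm hxe.2),
        add_zero, zero_add]
      exact valence_le_valence_map (OEdge.ends_contract e.src e.tgt) x

theorem isQuotientMap_contractEdge (hg : g.IsSimple) (he : e ∈ g.edges) (hr : e.IsRegular g.ve) :
    IsQuotientMap (mergeMap e.src e.tgt) g
      ⟨g.ve, g.vi - 1, (g.edges.erase e).map (OEdge.contract e.src e.tgt)⟩ where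
  map_lt_nv x hx := by
    have hlt := mergeMap_lt hr.1 (hg.1.1 e he).1 (hg.1.1 e he).2 hx
    simp only [nv] at *
    omega
  map_lt_ve x hx := (mergeMap_lt_iff hr.2 x).2 (.inl hx)
  exists_vertex _ := exists_valence_le_valence_contractEdge hg.1 he hr
  exists_edge f hf := by
    obtain ⟨f, hf', rfl⟩ := Multiset.mem_map.1 hf
    have hne := OEdge.ends_ne_of_mem_erase hg.nodup_ends he hf'
    rw [OEdge.src_contract_eq_tgt_contract_iff hr.1]
    refine ⟨f, Multiset.mem_of_mem_erase hf', OEdge.ends_contract _ _ f, fun _ => ?_,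
      fun h => .inl (h.resolve_right hne)⟩
    rw [OEdge.contract_of_ends_ne hne, OEdge.relabel]
  map_edge f hf := by
    by_cases hfe : f = e
    · exact .inl (hfe ▸ mergeMap_left_eq_right _ _)
    · exact .inr ⟨f.contract e.src e.tgt,
        Multiset.mem_map_of_mem _ ((Multiset.mem_erase_of_ne hfe).2 hf), OEdge.ends_contract _ _ f⟩

end Contraction

end OddGraph

/-! ### Invariance under changes of decoration -/

namespace OddGraph

/-- The relabelling `φ`, of sign `c`, descends along the contraction of `(i, j)`: it induces a
relabelling `ψ` of the contracted graphs, which have `ve` external and `vi` internal vertices, and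
the signs of `φ`, of `ψ` and of the two contractions match. -/
def RelabelCompatible (φ : ℕ → ℕ) (c : ℝ) (ve vi i j : ℕ) : Prop :=
  ∃ (ψ : ℕ → ℕ) (d : ℝ), (∀ x, mergeMap (φ i) (φ j) (φ x) = ψ (mergeMap i j x)) ∧
    (∀ t, cls ⟨ve, vi, t⟩ = d • cls ⟨ve, vi, t.map (OEdge.relabel ψ)⟩) ∧
    csign i j * d = c * csign (φ i) (φ j)

namespace RelabelCompatible

variable {φ : ℕ → ℕ} {c : ℝ} {ve vi i j k : ℕ}

theorem symm (h : RelabelCompatible φ c ve vi i j) (hφ : φ.Injective) (hij : i ≠ j) :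
    RelabelCompatible φ c ve vi j i := by
  obtain ⟨ψ, d, hmerge, hcls, hsign⟩ := h
  refine ⟨ψ, d, fun x => ?_, hcls, ?_⟩
  · rw [mergeMap_comm, mergeMap_comm j, hmerge]
  · rw [csign_swap hij, csign_swap (hφ.ne hij), neg_mul, mul_neg, hsign]

theorem signedContract_eq (h : RelabelCompatible φ c ve vi i j) (hφ : φ.Injective)
    (s : Multiset OEdge) :
    signedContract ve vi s i j =
      c • signedContract ve vi (s.map (OEdge.relabel φ)) (φ i) (φ j) := by
  obtain ⟨ψ, d, hmerge, hcls, hsign⟩ := h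
  have hmap : (s.map (OEdge.relabel φ)).map (OEdge.contract (φ i) (φ j)) =
      (s.map (OEdge.contract i j)).map (OEdge.relabel ψ) := by
    simp only [Multiset.map_map, Function.comp_def, OEdge.contract_relabel hφ hmerge]
  rw [signedContract, signedContract, hcls, hmap, smul_smul, smul_smul, hsign]

theorem of_merge_eq (hmerge : ∀ x, mergeMap (φ i) (φ j) (φ x) = mergeMap i j x)
    (hsign : csign i j = c * csign (φ i) (φ j)) : RelabelCompatible φ c ve vi i j := by
  refine ⟨id, 1, hmerge, fun t => ?_, by rw [mul_one, hsign]⟩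
  rw [OEdge.relabel_id, Multiset.map_id, one_smul]

theorem swap_of_lt (hij : i < j) (hjk : j < k) (hve : ve < k) (hnv : k < ve + vi) :
    RelabelCompatible (Equiv.swap k (k + 1)) (-1) ve vi i j := by
  have hi : Equiv.swap k (k + 1) i = i := Equiv.swap_apply_of_ne_of_ne (by omega) (by omega)
  have hj : Equiv.swap k (k + 1) j = j := Equiv.swap_apply_of_ne_of_ne (by omega) (by omega)
  refine ⟨Equiv.swap (k - 1) (k - 1 + 1), -1, fun x => ?_,
    cls_swap ve (by omega) (by omega), ?_⟩
  · rw [hi, hj, mergeMap_of_lt hij, mergeMap_of_lt hij, Equiv.swap_apply_def,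
      Equiv.swap_apply_def]
    split_ifs <;> omega
  · rw [hi, hj, mul_comm]

theorem swap_of_gt (hij : i < j) (hkj : k + 1 < j) (hve : ve ≤ k) (hnv : k + 1 < ve + vi) :
    RelabelCompatible (Equiv.swap k (k + 1)) (-1) ve vi i j := by
  have hj : Equiv.swap k (k + 1) j = j := Equiv.swap_apply_of_ne_of_ne (by omega) (by omega)
  have hi : Equiv.swap k (k + 1) i < j := by rw [Equiv.swap_apply_def]; grind
  refine ⟨Equiv.swap k (k + 1), -1, fun x => ?_, cls_swap ve hve hnv, ?_⟩
  · rw [hj, mergeMap_of_lt hi, mergeMap_of_lt hij]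
    simp only [Equiv.swap_apply_def]
    split_ifs <;> omega
  · rw [hj, csign_of_lt hi, csign_of_lt hij, mul_comm]

theorem swap_of_mem (hij : i < j) (hj : j = k ∨ j = k + 1) :
    RelabelCompatible (Equiv.swap k (k + 1)) (-1) ve vi i j := by
  refine of_merge_eq (fun x => ?_) ?_
  · simp only [Equiv.swap_apply_def, mergeMap]
    grind
  rw [csign_of_lt hij]
  rcases hj with rfl | rfl
  · rw [Equiv.swap_apply_left, Equiv.swap_apply_of_ne_of_ne hij.ne (by omega),
      csign_of_lt (by omega), pow_succ _ (j + 1), neg_one_mul, mul_neg_one, neg_neg]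
  rcases eq_or_ne i k with rfl | hik
  · rw [Equiv.swap_apply_left, Equiv.swap_apply_right, csign_of_gt hij, neg_one_mul,
      pow_succ _ (i + 1), mul_neg_one]
  · rw [Equiv.swap_apply_right, Equiv.swap_apply_of_ne_of_ne hik hij.ne,
      csign_of_lt (by omega), neg_one_mul, pow_succ _ (k + 1), mul_neg_one]

theorem swap (hij : i ≠ j) (hlt : max i j < k → ve < k ∧ k < ve + vi)
    (hgt : k + 1 < max i j → ve ≤ k ∧ k + 1 < ve + vi) :
    RelabelCompatible (Equiv.swap k (k + 1)) (-1) ve vi i j := by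
  wlog h : i < j generalizing i j
  · rw [max_comm] at hlt hgt
    exact (this hij.symm hlt hgt (by omega)).symm (Equiv.injective _) hij.symm
  rw [max_eq_right h.le] at hlt hgt
  rcases lt_or_ge j k with hjk | hkj
  · exact swap_of_lt h hjk (hlt hjk).1 (hlt hjk).2
  rcases lt_or_ge (k + 1) j with hkj' | hjk
  · exact swap_of_gt h hkj' (hgt hkj').1 (hgt hkj').2
  · exact swap_of_mem h (by omega)

theorem rotate_edge (hij : i ≠ j) (hmax : ve ≤ max i j) :
    RelabelCompatible (rotateLabel ve) ((-1) ^ (ve - 1)) ve vi i j := by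
  wlog h : i < j generalizing i j
  · exact (this hij.symm (by rwa [max_comm]) (by omega)).symm (Equiv.injective _) hij.symm
  rw [max_eq_right h.le] at hmax
  have hj : rotateLabel ve j = j := by rw [rotateLabel_apply]; grind
  have hi : rotateLabel ve i < j := by rw [rotateLabel_apply]; grind
  refine ⟨rotateLabel ve, (-1) ^ (ve - 1), fun x => ?_, cls_rotate ve vi, ?_⟩
  · rw [hj, mergeMap_of_lt hi, mergeMap_of_lt h]
    simp only [rotateLabel_apply]
    split_ifs <;> omega
  · rw [hj, csign_of_lt hi, csign_of_lt h, mul_comm]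

theorem rotate_inner_arc (h : i + 1 < ve) :
    RelabelCompatible (rotateLabel ve) ((-1) ^ (ve - 1)) (ve - 1) vi i (i + 1) := by
  obtain ⟨n, rfl⟩ : ∃ n, ve = n + 2 := ⟨ve - 2, by omega⟩
  have hi : rotateLabel (n + 2) i = i + 1 := by rw [rotateLabel_apply, if_pos h]
  refine ⟨rotateLabel (n + 1), (-1) ^ n, fun x => ?_, cls_rotate (n + 1) vi, ?_⟩
  · simp only [rotateLabel_apply, mergeMap]
    grind
  rw [hi, csign_of_lt (lt_add_one i)]
  rcases Nat.lt_or_ge (i + 2) (n + 2) with hnext | hlast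
  · have hi' : rotateLabel (n + 2) (i + 1) = i + 2 := by rw [rotateLabel_apply, if_pos hnext]
    rw [hi', csign_of_lt (by omega : i + 1 < i + 2), Nat.add_sub_cancel (n + 1) 1]
    ring
  · obtain rfl : i = n := by omega
    have hi' : rotateLabel (i + 2) (i + 1) = 0 := by rw [rotateLabel_apply]; simp
    rw [hi', csign_of_gt i.add_one_pos, Nat.add_sub_cancel (i + 1) 1]
    ring

theorem rotate_last_arc (n : ℕ) :
    RelabelCompatible (rotateLabel (n + 2)) ((-1) ^ (n + 1)) (n + 1) vi (n + 1) 0 := by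
  have hlast : rotateLabel (n + 2) (n + 1) = 0 := by rw [rotateLabel_apply]; simp
  have hzero : rotateLabel (n + 2) 0 = 1 := by rw [rotateLabel_apply]; simp
  refine of_merge_eq (fun x => ?_) ?_
  · rw [hlast, hzero]
    simp only [rotateLabel_apply, mergeMap]
    grind
  · rw [hlast, hzero, csign_of_gt n.add_one_pos, csign_of_lt one_pos]
    ring

theorem rotate_arc (hi : i ∈ arcStarts ve) :
    RelabelCompatible (rotateLabel ve) ((-1) ^ (ve - 1)) (ve - 1) vi i (rotateLabel ve i) := by
  obtain ⟨hve, hi⟩ := mem_arcStarts.1 hi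
  rcases Nat.lt_or_ge (i + 1) ve with h | h
  · rw [rotateLabel_apply ve i, if_pos h]
    exact rotate_inner_arc h
  · obtain ⟨n, rfl⟩ : ∃ n, ve = n + 2 := ⟨ve - 2, by omega⟩
    obtain rfl : i = n + 1 := by omega
    rw [rotateLabel_apply (n + 2) (n + 1), if_neg h.not_gt, if_pos rfl]
    exact rotate_last_arc n

end RelabelCompatible

theorem delta_relabel {ve vi : ℕ} (φ : Equiv.Perm ℕ) (c : ℝ)
    (hve : ∀ v, φ v < ve ↔ v < ve) (hnv : ∀ v, φ v < ve + vi ↔ v < ve + vi)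
    (hedge : ∀ i j, i ≠ j → ¬(i < ve ∧ j < ve) → i < ve + vi → j < ve + vi →
      RelabelCompatible φ c ve (vi - 1) i j)
    (harc : ∀ i ∈ arcStarts ve, φ (rotateLabel ve i) = rotateLabel ve (φ i) ∧
      RelabelCompatible φ c (ve - 1) vi i (rotateLabel ve i))
    (s : Multiset OEdge) :
    delta ⟨ve, vi, s⟩ = c • delta ⟨ve, vi, s.map (OEdge.relabel φ)⟩ := by
  have hsimple := isSimple_relabel_iff (s := s) φ hve hnv
  by_cases hs : IsSimple ⟨ve, vi, s⟩
  swap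
  · rw [delta_eq_zero hs, delta_eq_zero (hsimple.not.2 hs), smul_zero]
  rw [delta_eq hs, delta_eq (hsimple.2 hs), smul_add]
  congr 1
  · have hregular (e : OEdge) : (e.relabel φ).IsRegular ve ↔ e.IsRegular ve := by
      simp [OEdge.IsRegular, OEdge.relabel, hve]
    rw [Multiset.smul_sum, Multiset.filter_map, Multiset.map_map, Multiset.map_map]
    simp only [Function.comp_def, hregular]
    refine congrArg _ (Multiset.map_congr rfl fun e he => ?_)
    obtain ⟨he, hr⟩ := Multiset.mem_filter.1 he
    have hlt := hs.1.1 e he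
    rw [(hedge e.src e.tgt hr.1 hr.2 hlt.1 hlt.2).signedContract_eq φ.injective,
      Multiset.map_erase _ (OEdge.relabel_injective φ.injective), OEdge.relabel]
  · rw [Finset.smul_sum]
    refine Finset.sum_equiv φ (fun i => ?_) fun i hi => ?_
    · simp only [mem_arcStarts, hve]
    · rw [← (harc i hi).1]
      exact (harc i hi).2.signedContract_eq φ.injective s

theorem delta_swap (ve : ℕ) {vi k : ℕ} (hk : ve ≤ k) (hk' : k + 1 < ve + vi)
    (s : Multiset OEdge) :
    delta ⟨ve, vi, s⟩ =
      (-1 : ℝ) • delta ⟨ve, vi, s.map (OEdge.relabel (Equiv.swap k (k + 1)))⟩ := by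
  refine delta_relabel _ _ (fun v => ?_) (fun v => ?_) (fun i j hij hn hi hj => ?_)
    (fun i hi => ?_) s
  · rw [Equiv.swap_apply_def]; grind
  · rw [Equiv.swap_apply_def]; grind
  · exact .swap hij (by omega) (by omega)
  · have hi' := (mem_arcStarts.1 hi).2
    have hj' := rotateLabel_lt_iff.2 hi'
    refine ⟨?_, .swap (rotateLabel_ne hi) (by omega) (by omega)⟩
    rw [Equiv.swap_apply_of_ne_of_ne (by omega) (by omega),
      Equiv.swap_apply_of_ne_of_ne (by omega) (by omega)]

theorem delta_rotate (ve vi : ℕ) (s : Multiset OEdge) :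
    delta ⟨ve, vi, s⟩ =
      ((-1 : ℝ) ^ (ve - 1)) • delta ⟨ve, vi, s.map (OEdge.relabel (rotateLabel ve))⟩ := by
  refine delta_relabel _ _ (fun _ => rotateLabel_lt_iff) (fun v => ?_)
    (fun i j hij hn _ _ => .rotate_edge hij (by omega)) (fun i hi => ⟨rfl, .rotate_arc hi⟩) s
  rw [rotateLabel_apply]
  grind

section Flip

variable {ve vi i j : ℕ}

theorem signedContract_swap (hij : i ≠ j) {s : Multiset OEdge}
    (hs : ∀ f ∈ s, f.ends ≠ s(i, j)) :
    signedContract ve vi s j i = -signedContract ve vi s i j := by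
  rw [signedContract, signedContract, csign_swap hij, neg_smul,
    Multiset.map_congr rfl fun f hf => OEdge.contract_comm (hs f hf)]

theorem signedContract_flip_cons (hij : i ≠ j) (a : OEdge) (s : Multiset OEdge) :
    signedContract ve vi (flipOEdge a ::ₘ s) i j = -signedContract ve vi (a ::ₘ s) i j := by
  simp only [signedContract, Multiset.map_cons, OEdge.contract_flip hij, cls_flip, smul_neg]

theorem isRegular_flip {n : ℕ} {a : OEdge} : (flipOEdge a).IsRegular n ↔ a.IsRegular n := by
  unfold OEdge.IsRegular flipOEdge
  grind

theorem delta_flip (ve vi : ℕ) (a : OEdge) (s : Multiset OEdge) :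
    delta ⟨ve, vi, flipOEdge a ::ₘ s⟩ = -delta ⟨ve, vi, a ::ₘ s⟩ := by
  by_cases hs : IsSimple ⟨ve, vi, a ::ₘ s⟩
  swap
  · rw [delta_eq_zero hs, delta_eq_zero (isSimple_flip_iff.not.2 hs), neg_zero]
  have hrest : ((s.filter (OEdge.IsRegular ve)).map fun e =>
        signedContract ve (vi - 1) ((flipOEdge a ::ₘ s).erase e) e.src e.tgt).sum =
      -((s.filter (OEdge.IsRegular ve)).map fun e =>
        signedContract ve (vi - 1) ((a ::ₘ s).erase e) e.src e.tgt).sum := by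
    rw [← Multiset.sum_map_neg]
    refine congrArg _ (Multiset.map_congr rfl fun e he => ?_)
    obtain ⟨he, hr⟩ := Multiset.mem_filter.1 he
    rw [Multiset.erase_cons_tail_of_mem he, Multiset.erase_cons_tail_of_mem he,
      signedContract_flip_cons hr.1]
  rw [delta_eq hs, delta_eq (isSimple_flip_iff.2 hs), neg_add]
  dsimp only
  congr 1
  · by_cases ha : a.IsRegular ve
    · have hends (f) (hf : f ∈ s) : f.ends ≠ s(a.src, a.tgt) :=
        OEdge.ends_ne_of_mem_erase hs.nodup_ends (Multiset.mem_cons_self a s) (by simpa using hf)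
      rw [Multiset.filter_cons_of_pos _ ha, Multiset.filter_cons_of_pos _ (isRegular_flip.2 ha),
        Multiset.map_cons, Multiset.map_cons, Multiset.sum_cons, Multiset.sum_cons, hrest, neg_add,
        Multiset.erase_cons_head, Multiset.erase_cons_head, OEdge.flip_of_ne ha.1,
        signedContract_swap ha.1 hends]
    · rw [Multiset.filter_cons_of_neg _ ha, Multiset.filter_cons_of_neg _ (isRegular_flip.not.2 ha),
        hrest]
  · rw [← Finset.sum_neg_distrib]
    exact Finset.sum_congr rfl fun i hi => signedContract_flip_cons (rotateLabel_ne hi) a s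

theorem delta_flips (ve vi : ℕ) (F : Multiset (OEdge × Bool)) (s : Multiset OEdge) :
    delta ⟨ve, vi, F.map Prod.fst + s⟩ =
      ((-1 : ℝ) ^ Multiset.card (F.filter fun p => p.2 = true)) •
        delta ⟨ve, vi, F.map (fun p => if p.2 then flipOEdge p.1 else p.1) + s⟩ := by
  induction F using Multiset.induction_on generalizing s with
  | empty => simp
  | cons p F ih =>
    obtain ⟨a, b⟩ := p
    rw [Multiset.map_cons, Multiset.map_cons, Multiset.cons_add, ← Multiset.add_cons,
      ih (a ::ₘ s), Multiset.add_cons]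
    cases b
    · simp
    · simp [delta_flip, pow_succ]

end Flip

section Permutation

variable (ve : ℕ) {vi : ℕ}

theorem delta_perm_zero (π : Equiv.Perm (Fin vi)) (s : Multiset OEdge) :
    delta ⟨ve, vi, s⟩ = ((Equiv.Perm.sign π : ℤ) : ℝ) •
      delta ⟨ve, vi, s.map (OEdge.relabel (permVertex ve vi π 0))⟩ := by
  have hone (s : Multiset OEdge) : delta ⟨ve, vi, s⟩ =
      ((Equiv.Perm.sign (1 : Equiv.Perm (Fin vi)) : ℤ) : ℝ) •
        delta ⟨ve, vi, s.map (OEdge.relabel (permVertex ve vi 1 0))⟩ := by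
    simp [permVertex_one_zero, OEdge.relabel_id]
  rcases vi with _ | n
  · rw [Subsingleton.elim π 1]
    exact hone s
  have hπ := Equiv.Perm.mclosure_swap_castSucc_succ n ▸ Submonoid.mem_top π
  induction hπ using Submonoid.closure_induction generalizing s with
  | mem _ hswap =>
    obtain ⟨k, rfl⟩ := hswap
    rw [permVertex_swap, Equiv.Perm.sign_swap (by simp [Fin.ext_iff])]
    simpa [add_assoc] using delta_swap ve (vi := n + 1) (k := ve + k) (by omega) (by omega) s
  | one => exact hone s
  | mul π π' _ _ ih ih' =>
    rw [ih' s, ih, permVertex_mul, smul_smul, Multiset.map_map, mul_comm, map_mul, Units.val_mul,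
      Int.cast_mul]
    rfl

theorem delta_perm (s : Multiset OEdge) (π : Equiv.Perm (Fin vi)) (r : ℕ) :
    delta ⟨ve, vi, s⟩ = (((Equiv.Perm.sign π : ℤ) : ℝ) *
      ((Equiv.Perm.sign (finRotate ve ^ r) : ℤ) : ℝ)) •
        delta ⟨ve, vi, s.map (OEdge.relabel (permVertex ve vi π r))⟩ := by
  induction r generalizing s with
  | zero => simpa using delta_perm_zero ve π s
  | succ r ih =>
    rw [delta_rotate, ih, permVertex_add_one, Multiset.map_map, smul_smul]
    refine congrArg₂ _ ?_ rfl
    rcases ve with _ | n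
    · simp [Subsingleton.elim (finRotate 0) 1]
    · simp only [Nat.add_sub_cancel, pow_succ, map_mul, map_pow, sign_finRotate, Units.val_mul,
        Units.val_pow_eq_pow_val, Units.val_neg, Units.val_one, Int.cast_mul, Int.cast_pow,
        Int.cast_neg, Int.cast_one]
      ring

theorem delta_eq_smul {g g' : OddGraph} {ε : ℝ} (h : OddRel g g' ε) :
    g.delta = ε • g'.delta := by
  obtain ⟨ve, vi, s⟩ := g
  obtain ⟨ve', vi', s'⟩ := g'
  obtain ⟨rfl, rfl, π, r, F, hfst, rfl, rfl⟩ := h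
  have hflips := delta_flips ve' vi' F 0
  rw [add_zero, add_zero, hfst] at hflips
  rw [delta_perm ve' s π r, ← permOEdge_eq_relabel, hflips, smul_smul]

end Permutation

theorem deltaFree_single (g : OddGraph) : deltaFree (Finsupp.single g 1) = deltaGen g := by
  simp [deltaFree]

end OddGraph

open OddGraph in
/-- The coboundary operator of the odd graph complex. -/
noncomputable def oddDelta : Do →ₗ[ℝ] Do :=
  oddRelations.liftQ (oddRelations.mkQ ∘ₗ deltaFree) <| by
    have hsingle (g : OddGraph) :
        (oddRelations.mkQ ∘ₗ deltaFree) (Finsupp.single g 1) = g.delta :=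
      congrArg oddRelations.mkQ (deltaFree_single g)
    refine Submodule.span_le.2 ?_
    rintro x (((⟨g, h, rfl⟩ | ⟨g, h, rfl⟩) | ⟨g, h, rfl⟩) | ⟨g, g', ε, h, rfl⟩)
    · exact (hsingle g).trans (delta_eq_zero fun hg => h hg.1)
    · exact (hsingle g).trans (delta_eq_zero fun hg => hg.2.1 h)
    · exact (hsingle g).trans (delta_eq_zero fun hg => hg.2.2 h)
    · rw [SetLike.mem_coe, LinearMap.mem_ker, map_sub, map_smul, hsingle, hsingle,
        delta_eq_smul h, sub_self]

theorem oddDelta_cls (g : OddGraph) : oddDelta g.cls = g.delta :=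
  congrArg oddRelations.mkQ (OddGraph.deltaFree_single g)

/-! ### The square of the coboundary -/

theorem sum_sum_eq_zero_of_antisymm {α M : Type*} [AddCommGroup M] [IsAddTorsionFree M]
    (s : Finset α) (X : α → α → M) (h : ∀ a ∈ s, ∀ b ∈ s, X a b = -X b a) :
    ∑ a ∈ s, ∑ b ∈ s, X a b = 0 := by
  refine self_eq_neg.1 ?_
  conv_lhs => rw [Finset.sum_comm]
  simp only [← Finset.sum_neg_distrib]
  exact Finset.sum_congr rfl fun a ha => Finset.sum_congr rfl fun b hb => h b hb a ha

theorem sum_map_filter_eq_sum_ite {α M : Type*} [DecidableEq α] [AddCommMonoid M] {s : Multiset α}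
    (hs : s.Nodup) (p : α → Prop) [DecidablePred p] (T : α → M) :
    ((s.filter p).map T).sum = ∑ a ∈ s.toFinset, if p a then T a else 0 := by
  rw [← Finset.sum_filter, Finset.sum, Finset.filter_val, Multiset.toFinset_val, hs.dedup]

namespace OEdge

variable {i j n : ℕ} {s : Multiset OEdge}

/-- Identifying `i` and `j` makes the edge `f` of a graph with edge set `s` part of a double
edge. -/
def IsDoubled (i j : ℕ) (s : Multiset OEdge) (f : OEdge) : Prop :=
  ∃ h ∈ s, h.ends ≠ f.ends ∧ (h.contract i j).ends = (f.contract i j).ends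

theorem nodup_ends_contract_iff (hs : (s.map ends).Nodup) {f : OEdge} (hf : f ∈ s) :
    ((s.map (contract i j)).map ends).Nodup ↔
      ¬f.IsDoubled i j s ∧ (((s.erase f).map (contract i j)).map ends).Nodup := by
  have hmem : (f.contract i j).ends ∈ ((s.erase f).map (contract i j)).map ends ↔
      f.IsDoubled i j s := by
    simp only [Multiset.map_map, Multiset.mem_map, Function.comp_apply, IsDoubled,
      mem_erase_iff_of_nodup_ends hs hf]
    grind
  rw [← hmem, ← Multiset.nodup_cons, ← Multiset.map_cons, ← Multiset.map_cons,
    Multiset.cons_erase hf]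

theorem nodup_ends_of_contract (h : ((s.map (contract i j)).map ends).Nodup) :
    (s.map ends).Nodup := by
  refine Multiset.Nodup.of_map (Sym2.map (mergeMap i j)) ?_
  simpa only [Multiset.map_map, Function.comp_def, ends_contract] using h

theorem isRegular_contract_arc_iff (hij : i ≠ j) (hi : i < n) (hj : j < n) {e : OEdge} :
    (e.contract i j).IsRegular (n - 1) ↔ e.IsRegular n := by
  unfold IsRegular
  rw [src_contract, tgt_contract, mergeMap_lt_sub_one_iff hij hi hj,
    mergeMap_lt_sub_one_iff hij hi hj, Ne, mergeMap_eq_iff hij]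
  grind

theorem isRegular_contract_symm {e f : OEdge} (hef : e.ends ≠ f.ends) (he : e.IsRegular n)
    (hf : (f.contract e.src e.tgt).IsRegular n) :
    f.IsRegular n ∧ (e.contract f.src f.tgt).IsRegular n := by
  have hf' : f.IsRegular n := by
    unfold IsRegular at *
    rw [src_contract, tgt_contract, mergeMap_lt_iff he.2, mergeMap_lt_iff he.2] at hf
    exact ⟨fun h => hf.1 (by rw [h]), by tauto⟩
  refine ⟨hf', ?_⟩
  unfold IsRegular at *
  rw [src_contract, tgt_contract, mergeMap_lt_iff he.2, mergeMap_lt_iff he.2, Ne,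
    mergeMap_eq_iff he.1] at hf
  rw [src_contract, tgt_contract, mergeMap_lt_iff hf'.2, mergeMap_lt_iff hf'.2, Ne,
    mergeMap_eq_iff hf'.1]
  rw [Ne, ends_eq_iff] at hef
  grind

end OEdge

namespace OddGraph

section DoubleContract

variable {ve vi i j k l : ℕ} {s : Multiset OEdge}

theorem signedContract_eq_zero (hs : ¬(s.map OEdge.ends).Nodup) :
    signedContract ve vi s i j = 0 := by
  rw [signedContract, cls_eq_zero_of_not_nodup_ends fun h => hs (OEdge.nodup_ends_of_contract h),
    smul_zero]

theorem oddDelta_signedContract : oddDelta (signedContract ve vi s i j) =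
    csign i j • delta ⟨ve, vi, s.map (OEdge.contract i j)⟩ := by
  rw [signedContract, map_smul, oddDelta_cls]

/-- The signed class of the graph obtained from an edge set `s` by contracting first the pair
`(i, j)` and then the pair `(k, l)`; the numbers `ve`, `vi` are those of the resulting graph. -/
noncomputable def doubleContract (ve vi : ℕ) (s : Multiset OEdge) (i j k l : ℕ) : Do :=
  csign i j •
    signedContract ve vi (s.map (OEdge.contract i j)) (mergeMap i j k) (mergeMap i j l)

theorem doubleContract_comm (hij : i ≠ j) (hkl : k ≠ l) (hne : s(i, j) ≠ s(k, l))
    (hs : ∀ f ∈ s, (f.contract i j).ends ≠ s(mergeMap i j k, mergeMap i j l) ∨ i ≠ k ∧ j ≠ l) :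
    doubleContract ve vi s i j k l = -doubleContract ve vi s k l i j := by
  simp only [doubleContract, signedContract, smul_smul, Multiset.map_map]
  rw [(mergeCommute hij hkl hne).2, neg_smul]
  congr 4
  exact Multiset.map_congr rfl fun f hf => OEdge.contract_contract hij hkl hne (hs f hf)

theorem doubleContract_flip {a : OEdge} (ha : a.src ≠ a.tgt) (hs : ∀ f ∈ s, f.ends ≠ a.ends) :
    doubleContract ve vi s (flipOEdge a).src (flipOEdge a).tgt k l =
      -doubleContract ve vi s a.src a.tgt k l := by
  rw [OEdge.flip_of_ne ha, doubleContract, doubleContract, csign_swap ha, neg_smul,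
    mergeMap_comm a.tgt, Multiset.map_congr rfl fun f hf => OEdge.contract_comm (hs f hf)]

theorem doubleContract_flip_cons (hij : i ≠ j) (hkl : mergeMap i j k ≠ mergeMap i j l) (a : OEdge)
    (s : Multiset OEdge) :
    doubleContract ve vi (flipOEdge a ::ₘ s) i j k l = -doubleContract ve vi (a ::ₘ s) i j k l := by
  rw [doubleContract, doubleContract, Multiset.map_cons, Multiset.map_cons, OEdge.contract_flip hij,
    signedContract_flip_cons hkl, smul_neg]

theorem smul_delta_contract (hs : (s.map OEdge.ends).Nodup)
    (hsimple : ((s.map (OEdge.contract i j)).map OEdge.ends).Nodup →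
      IsSimple ⟨ve, vi, s.map (OEdge.contract i j)⟩) :
    csign i j • delta ⟨ve, vi, s.map (OEdge.contract i j)⟩ =
      (∑ f ∈ s.toFinset,
        if (f.contract i j).IsRegular ve ∧ ¬f.IsDoubled i j s then
          doubleContract ve (vi - 1) (s.erase f) i j f.src f.tgt else 0) +
      ∑ k ∈ arcStarts ve, csign i j •
        signedContract (ve - 1) vi (s.map (OEdge.contract i j)) k (rotateLabel ve k) := by
  by_cases hs' : ((s.map (OEdge.contract i j)).map OEdge.ends).Nodup
  · have hdoubled (f) (hf : f ∈ s) : ¬f.IsDoubled i j s :=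
      ((OEdge.nodup_ends_contract_iff hs hf).1 hs').1
    rw [delta_eq (hsimple hs'), smul_add, Finset.smul_sum, Multiset.filter_map, Multiset.map_map,
      sum_map_filter_eq_sum_ite hs.of_map, Finset.smul_sum]
    congr 1
    refine Finset.sum_congr rfl fun f hf => ?_
    rw [Multiset.mem_toFinset] at hf
    simp only [hdoubled f hf, not_false_eq_true, and_true, smul_ite, smul_zero,
      Function.comp_apply, doubleContract, Multiset.map_erase_of_mem _ _ hf, OEdge.src_contract,
      OEdge.tgt_contract]
  · rw [delta_eq_zero fun h => hs' h.nodup_ends, smul_zero, Finset.sum_eq_zero,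
      Finset.sum_eq_zero, zero_add]
    · exact fun k _ => by rw [signedContract_eq_zero hs', smul_zero]
    · refine fun f hf => ite_eq_right_iff.2 fun h => ?_
      rw [OEdge.nodup_ends_contract_iff hs (Multiset.mem_toFinset.1 hf)] at hs'
      rw [doubleContract, signedContract_eq_zero fun h' => hs' ⟨h.2, h'⟩, smul_zero]

end DoubleContract

section TwoEdges

/-- The condition for contracting first `e` and then `f` to contribute to the square of the
coboundary. -/
def IsContractiblePair (g : OddGraph) (e f : OEdge) : Prop :=
  e.IsRegular g.ve ∧ (f.contract e.src e.tgt).IsRegular g.ve ∧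
    ¬f.IsDoubled e.src e.tgt (g.edges.erase e)

/-- The contribution to the square of the coboundary of contracting first the edge `e` and then
the edge `f`. -/
noncomputable def edgeEdge (g : OddGraph) (e f : OEdge) : Do :=
  if g.IsContractiblePair e f then
    doubleContract g.ve (g.vi - 1 - 1) ((g.edges.erase e).erase f) e.src e.tgt f.src f.tgt
  else 0

variable {g : OddGraph} {e f : OEdge}

theorem edgeEdge_self : g.edgeEdge e e = 0 := by
  refine if_neg fun h => h.2.1.1 ?_
  rw [OEdge.src_contract, OEdge.tgt_contract, mergeMap_left_eq_right]

theorem IsContractiblePair.symm (hg : (g.edges.map OEdge.ends).Nodup) (he : e ∈ g.edges)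
    (hf : f ∈ g.edges) (hef : e.ends ≠ f.ends) (h : g.IsContractiblePair e f) :
    g.IsContractiblePair f e := by
  obtain ⟨hr, hr'⟩ := OEdge.isRegular_contract_symm hef h.1 h.2.1
  refine ⟨hr, hr', ?_⟩
  rintro ⟨a, ha, hae, hends⟩
  rw [OEdge.mem_erase_iff_of_nodup_ends hg hf] at ha
  exact h.2.2 ⟨a, (OEdge.mem_erase_iff_of_nodup_ends hg he).2 ⟨hae, ha.2⟩, ha.1,
    OEdge.ends_contract_eq_rotate hr.1 h.1.1 hef.symm hae.symm hends⟩

theorem edgeEdge_antisymm (hg : (g.edges.map OEdge.ends).Nodup) (he : e ∈ g.edges)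
    (hf : f ∈ g.edges) : g.edgeEdge e f = -g.edgeEdge f e := by
  rcases eq_or_ne e f with rfl | hne
  · rw [edgeEdge_self, neg_zero]
  have hef : e.ends ≠ f.ends := fun h => hne (Multiset.inj_on_of_nodup_map hg e he f hf h)
  by_cases h : g.IsContractiblePair e f
  · have hr := (h.symm hg he hf hef).1
    rw [edgeEdge, edgeEdge, if_pos h, if_pos (h.symm hg he hf hef), Multiset.erase_comm]
    refine doubleContract_comm h.1.1 hr.1 hef fun a ha => .inl fun hends => h.2.2 ?_
    refine ⟨a, ?_, OEdge.ends_ne_of_mem_erase hg hf (Multiset.mem_of_mem_erase ha), ?_⟩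
    · exact Multiset.mem_of_mem_erase (Multiset.erase_comm _ f e ▸ ha)
    · rw [hends, OEdge.ends, OEdge.src_contract, OEdge.tgt_contract]
  · rw [edgeEdge, edgeEdge, if_neg h, if_neg fun h' => h (h'.symm hg hf he hef.symm), neg_zero]

end TwoEdges

section TwoArcs

/-- The contribution to the square of the coboundary of contracting first the arc starting at `i`
and then the arc starting at `k`. -/
noncomputable def arcArc (g : OddGraph) (i k : ℕ) : Do :=
  if i ≠ k ∧ 3 ≤ g.ve then
    doubleContract (g.ve - 1 - 1) g.vi g.edges i (rotateLabel g.ve i) k (rotateLabel g.ve k)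
  else 0

theorem arcArc_antisymm {g : OddGraph} {i k : ℕ} (hi : i ∈ arcStarts g.ve)
    (hk : k ∈ arcStarts g.ve) : g.arcArc i k = -g.arcArc k i := by
  by_cases h : i ≠ k ∧ 3 ≤ g.ve
  · rw [arcArc, arcArc, if_pos h, if_pos ⟨h.1.symm, h.2⟩]
    refine doubleContract_comm (rotateLabel_ne hi) (rotateLabel_ne hk) ?_
      fun f _ => .inr ⟨h.1, (rotateLabel g.ve).injective.ne h.1⟩
    rw [mem_arcStarts] at hi hk
    simp only [Ne, Sym2.eq_iff, rotateLabel_apply]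
    grind
  · rw [arcArc, arcArc, if_neg h, if_neg (by tauto), neg_zero]

theorem sum_arcStarts_sub_one {M : Type*} [AddCommMonoid M] {n i : ℕ} (hi : i ∈ arcStarts n)
    (T : ℕ → ℕ → M) :
    ∑ j ∈ arcStarts (n - 1), T j (rotateLabel (n - 1) j) = ∑ k ∈ arcStarts n,
      if i ≠ k ∧ 3 ≤ n then
        T (mergeMap i (rotateLabel n i) k) (mergeMap i (rotateLabel n i) (rotateLabel n k))
      else 0 := by
  rcases Nat.lt_or_ge n 3 with h | h
  · rw [Finset.sum_eq_zero (s := arcStarts n) fun k _ => if_neg (by omega), arcStarts,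
      if_neg (by omega), Finset.sum_empty]
  rw [← Finset.sum_filter]
  symm
  refine Finset.sum_nbij' (mergeMap i (rotateLabel n i)) (fun j => if j < i then j else j + 1)
    ?_ ?_ ?_ ?_ fun k hk => congrArg _ ?_ <;> try intro k hk
  all_goals
    simp only [Finset.mem_filter, mem_arcStarts, mergeMap, rotateLabel_apply] at *
    grind

end TwoArcs

section EdgeAndArc

/-- The contribution to the square of the coboundary of contracting first the edge `e` and then
the arc starting at `i`. -/
noncomputable def edgeArc (g : OddGraph) (e : OEdge) (i : ℕ) : Do :=
  if e.IsRegular g.ve then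
    doubleContract (g.ve - 1) (g.vi - 1) (g.edges.erase e) e.src e.tgt i (rotateLabel g.ve i)
  else 0

/-- The contribution to the square of the coboundary of contracting first the arc starting at `i`
and then the edge `e`. -/
noncomputable def arcEdge (g : OddGraph) (i : ℕ) (e : OEdge) : Do :=
  if e.IsRegular g.ve ∧ ¬e.IsDoubled i (rotateLabel g.ve i) g.edges then
    doubleContract (g.ve - 1) (g.vi - 1) (g.edges.erase e) i (rotateLabel g.ve i) e.src e.tgt
  else 0

variable {g : OddGraph} {e h : OEdge} {i j w n : ℕ}

theorem edgeArc_add_arcEdge (hg : (g.edges.map OEdge.ends).Nodup) (he : e ∈ g.edges)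
    (hi : i ∈ arcStarts g.ve) (hd : ¬e.IsDoubled i (rotateLabel g.ve i) g.edges) :
    g.edgeArc e i + g.arcEdge i e = 0 := by
  by_cases hr : e.IsRegular g.ve
  swap
  · rw [edgeArc, arcEdge, if_neg hr, if_neg fun h => hr h.1, add_zero]
  have hlt := (mem_arcStarts.1 hi).2
  have hne : s(i, rotateLabel g.ve i) ≠ s(e.src, e.tgt) := fun h => hr.2 <| by
    have := rotateLabel_lt_iff.2 hlt
    rcases Sym2.eq_iff.1 h with ⟨h1, h2⟩ | ⟨h1, h2⟩ <;> grind
  rw [edgeArc, arcEdge, if_pos hr, if_pos ⟨hr, hd⟩, add_comm, doubleContract_comm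
    (rotateLabel_ne hi) hr.1 hne fun f hf => .inl fun hends => hd ?_, neg_add_cancel]
  rw [OEdge.mem_erase_iff_of_nodup_ends hg he] at hf
  refine ⟨f, hf.2, hf.1, ?_⟩
  rw [hends, OEdge.ends, OEdge.src_contract, OEdge.tgt_contract]

theorem mergeMap_mergeMap_of_triangle (hi : i < w) (hj : j < w) (x : ℕ) :
    mergeMap i j (mergeMap i w x) = mergeMap i j (mergeMap j w x) := by
  rw [mergeMap_of_lt hi, mergeMap_of_lt hj]
  split_ifs
  exacts [mergeMap_left_eq_right i j, rfl, rfl]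

theorem contract_contract_of_triangle (hi : i < w) (hj : j < w) {f : OEdge}
    (hfi : f.ends ≠ s(i, w)) (hfj : f.ends ≠ s(j, w)) :
    (f.contract i w).contract i j = (f.contract j w).contract i j := by
  refine OEdge.ext' ?_ ?_ ?_
  · simp only [OEdge.src_contract, mergeMap_mergeMap_of_triangle hi hj]
  · simp only [OEdge.tgt_contract, mergeMap_mergeMap_of_triangle hi hj]
  · simp only [OEdge.ends, Ne, Sym2.eq_iff] at hfi hfj
    simp only [OEdge.lp_contract, OEdge.src_contract, OEdge.tgt_contract, mergeMap_of_lt hi,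
      mergeMap_of_lt hj]
    grind

theorem doubleContract_of_triangle_of_lt {ve vi : ℕ} {t : Multiset OEdge} (hij : i ≠ j) (hi : i < w)
    (hj : j < w) (ht : ∀ f ∈ t, f.ends ≠ s(i, w) ∧ f.ends ≠ s(j, w)) (l l' : Bool) :
    doubleContract ve vi (⟨j, w, l'⟩ ::ₘ t) i w i j =
      -doubleContract ve vi (⟨i, w, l⟩ ::ₘ t) j w i j := by
  have hii : mergeMap i w i = i := by rw [mergeMap_of_lt hi]; grind
  have hij' : mergeMap i w j = j := by rw [mergeMap_of_lt hi]; grind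
  have hji : mergeMap j w i = i := by rw [mergeMap_of_lt hj]; grind
  have hjj : mergeMap j w j = j := by rw [mergeMap_of_lt hj]; grind
  have hflip : ((⟨j, w, l'⟩ : OEdge).contract i w).contract i j =
      flipOEdge (((⟨i, w, l⟩ : OEdge).contract j w).contract i j) := by
    simp [OEdge.contract, flipOEdge, mergeMap, hi.ne, hi.ne', hj.ne, hj.ne', hij, hij.symm, hi.le,
      hj.le]
  simp only [doubleContract, signedContract, hii, hij', hji, hjj, Multiset.map_cons,
    Multiset.map_map, Function.comp_def, csign_of_lt hi, csign_of_lt hj, hflip, cls_flip, smul_neg]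
  rw [Multiset.map_congr rfl fun f hf =>
    contract_contract_of_triangle hi hj (ht f hf).1 (ht f hf).2]

theorem eq_or_eq_flip_of_ends_eq (he : e.ends = s(i, w)) (hne : i ≠ w) :
    ∃ l, e = ⟨i, w, l⟩ ∨ e = flipOEdge ⟨i, w, l⟩ := by
  obtain ⟨a, b, l⟩ := e
  refine ⟨l, ?_⟩
  rw [OEdge.flip_of_ne hne]
  rcases Sym2.eq_iff.1 he with ⟨rfl, rfl⟩ | ⟨rfl, rfl⟩ <;> simp

theorem doubleContract_of_triangle {ve vi : ℕ} {t : Multiset OEdge} (hij : i ≠ j) (hi : i < w)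
    (hj : j < w) (he : e.ends = s(i, w)) (hh : h.ends = s(j, w))
    (ht : ∀ f ∈ t, f.ends ≠ s(i, w) ∧ f.ends ≠ s(j, w)) :
    doubleContract ve vi (h ::ₘ t) e.src e.tgt i j =
      -doubleContract ve vi (e ::ₘ t) h.src h.tgt i j := by
  have hni : mergeMap i w i ≠ mergeMap i w j := by rw [Ne, mergeMap_eq_iff hi.ne]; omega
  have hnj : mergeMap j w i ≠ mergeMap j w j := by rw [Ne, mergeMap_eq_iff hj.ne]; omega
  have hsi : ∀ f ∈ h ::ₘ t, f.ends ≠ s(i, w) :=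
    Multiset.forall_mem_cons.2 ⟨by rw [hh]; simp; omega, fun f hf => (ht f hf).1⟩
  have hsj : ∀ f ∈ e ::ₘ t, f.ends ≠ s(j, w) :=
    Multiset.forall_mem_cons.2 ⟨by rw [he]; simp; omega, fun f hf => (ht f hf).2⟩
  have hlt (l l') := doubleContract_of_triangle_of_lt (ve := ve) (vi := vi) hij hi hj ht l l'
  obtain ⟨l, rfl | rfl⟩ := eq_or_eq_flip_of_ends_eq he hi.ne <;>
    obtain ⟨l', rfl | rfl⟩ := eq_or_eq_flip_of_ends_eq hh hj.ne
  · exact hlt l l'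
  · rw [doubleContract_flip_cons hi.ne hni, doubleContract_flip hj.ne hsj, hlt l l']
  · rw [doubleContract_flip_cons hj.ne hnj, doubleContract_flip hi.ne hsi, hlt l l']
  · rw [doubleContract_flip hi.ne hsi, doubleContract_flip hj.ne hsj,
      doubleContract_flip_cons hi.ne hni, doubleContract_flip_cons hj.ne hnj, hlt l l']

theorem exists_triangle (hij : i ≠ j) (hi : i < n) (hj : j < n) (hr : e.IsRegular n)
    (hne : h.ends ≠ e.ends) (heq : (h.contract i j).ends = (e.contract i j).ends) :
    ∃ w, n ≤ w ∧
      (e.ends = s(i, w) ∧ h.ends = s(j, w) ∨ e.ends = s(j, w) ∧ h.ends = s(i, w)) := by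
  simp only [OEdge.IsRegular, OEdge.ends_eq_iff, Ne, OEdge.src_contract, OEdge.tgt_contract,
    mergeMap_eq_iff hij] at *
  refine ⟨max e.src e.tgt, by omega, ?_⟩
  simp only [OEdge.ends, Sym2.eq_iff]
  grind

theorem ends_eq_map_swap (hij : i ≠ j) (hi : i < n) (hj : j < n) (hr : e.IsRegular n)
    (hne : h.ends ≠ e.ends) (heq : (h.contract i j).ends = (e.contract i j).ends) :
    h.ends = e.ends.map (Equiv.swap i j) := by
  obtain ⟨w, hw, ⟨he, hh⟩ | ⟨he, hh⟩⟩ := exists_triangle hij hi hj hr hne heq <;>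
    rw [he, hh, Sym2.map_mk, Equiv.swap_apply_of_ne_of_ne (x := w) (by omega) (by omega)] <;>
    simp

theorem isRegular_of_ends_eq (hi : i < n) (hw : n ≤ w) (he : e.ends = s(i, w)) :
    e.IsRegular n := by
  rcases Sym2.eq_iff.1 he with ⟨h1, h2⟩ | ⟨h1, h2⟩ <;> exact ⟨by omega, by omega⟩

theorem edgeArc_add_edgeArc_of_triangle (hg : (g.edges.map OEdge.ends).Nodup)
    (hi : i ∈ arcStarts g.ve) (he : e ∈ g.edges) (hh : h ∈ g.edges) (hw : g.ve ≤ w)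
    (hei : e.ends = s(i, w)) (hhi : h.ends = s(rotateLabel g.ve i, w)) :
    g.edgeArc e i + g.edgeArc h i = 0 := by
  have hij := rotateLabel_ne hi
  have hi' := (mem_arcStarts.1 hi).2
  have hj' := rotateLabel_lt_iff.2 hi'
  have hne : e ≠ h := by
    rintro rfl
    have := hei.symm.trans hhi
    simp only [Sym2.eq_iff] at this
    omega
  obtain ⟨t, ht⟩ := Multiset.exists_cons_of_mem ((Multiset.mem_erase_of_ne hne.symm).2 hh)
  have het : g.edges.erase h = e ::ₘ t := by
    rw [← Multiset.cons_erase he, ht, Multiset.cons_swap, Multiset.erase_cons_head]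
  have hends (f) (hf : f ∈ t) : f.ends ≠ s(i, w) ∧ f.ends ≠ s(rotateLabel g.ve i, w) := by
    rw [← hei, ← hhi]
    exact ⟨OEdge.ends_ne_of_mem_erase hg he (ht ▸ Multiset.mem_cons_of_mem hf),
      OEdge.ends_ne_of_mem_erase hg hh (het ▸ Multiset.mem_cons_of_mem hf)⟩
  rw [edgeArc, edgeArc, if_pos (isRegular_of_ends_eq hi' hw hei),
    if_pos (isRegular_of_ends_eq hj' hw hhi), ht, het, doubleContract_of_triangle hij
      (hi'.trans_le hw) (hj'.trans_le hw) hei hhi hends, neg_add_cancel]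

theorem edgeArc_add_edgeArc (hg : (g.edges.map OEdge.ends).Nodup) (hi : i ∈ arcStarts g.ve)
    (he : e ∈ g.edges) (hh : h ∈ g.edges) (hr : e.IsRegular g.ve) (hne : h.ends ≠ e.ends)
    (heq : (h.contract i (rotateLabel g.ve i)).ends = (e.contract i (rotateLabel g.ve i)).ends) :
    g.edgeArc e i + g.edgeArc h i = 0 := by
  have hi' := (mem_arcStarts.1 hi).2
  obtain ⟨w, hw, ⟨hei, hhi⟩ | ⟨hei, hhi⟩⟩ :=
    exists_triangle (rotateLabel_ne hi) hi' (rotateLabel_lt_iff.2 hi') hr hne heq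
  · exact edgeArc_add_edgeArc_of_triangle hg hi he hh hw hei hhi
  · rw [add_comm]
    exact edgeArc_add_edgeArc_of_triangle hg hi hh he hw hhi hei

theorem sum_edgeArc_eq_zero (hg : (g.edges.map OEdge.ends).Nodup) (hi : i ∈ arcStarts g.ve) :
    ∑ e ∈ g.edges.toFinset with e.IsRegular g.ve ∧ e.IsDoubled i (rotateLabel g.ve i) g.edges,
      g.edgeArc e i = 0 := by
  have hij := rotateLabel_ne hi
  have hi' := (mem_arcStarts.1 hi).2
  have hj' := rotateLabel_lt_iff.2 hi'
  choose! φ hmem hne heq using fun (e : OEdge)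
    (h : e.IsDoubled i (rotateLabel g.ve i) g.edges) => h
  have hreg {e : OEdge} (hr : e.IsRegular g.ve)
      (hd : e.IsDoubled i (rotateLabel g.ve i) g.edges) : (φ e).IsRegular g.ve := by
    obtain ⟨w, hw, ⟨-, hh⟩ | ⟨-, hh⟩⟩ := exists_triangle hij hi' hj' hr (hne e hd) (heq e hd)
    exacts [isRegular_of_ends_eq hj' hw hh, isRegular_of_ends_eq hi' hw hh]
  have hφ (e : OEdge) (he : e ∈ g.edges) (hd : e.IsDoubled i (rotateLabel g.ve i) g.edges) :
      (φ e).IsDoubled i (rotateLabel g.ve i) g.edges :=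
    ⟨e, he, (hne e hd).symm, (heq e hd).symm⟩
  refine Finset.sum_involution (fun e _ => φ e) ?_ ?_ ?_ ?_ <;>
    simp only [Finset.mem_filter, Multiset.mem_toFinset] <;> rintro e ⟨he, hr, hd⟩
  · exact edgeArc_add_edgeArc hg hi he (hmem e hd) hr (hne e hd) (heq e hd)
  · exact fun _ h => hne e hd (by rw [h])
  · exact ⟨hmem e hd, hreg hr hd, hφ e he hd⟩
  · have hd' := hφ e he hd
    refine Multiset.inj_on_of_nodup_map hg _ (hmem _ hd') e he ?_
    rw [ends_eq_map_swap hij hi' hj' (hreg hr hd) (hne _ hd') (heq _ hd'),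
      ends_eq_map_swap hij hi' hj' hr (hne e hd) (heq e hd), Sym2.map_map]
    simp

theorem sum_edgeArc_add_arcEdge (hg : (g.edges.map OEdge.ends).Nodup) (hi : i ∈ arcStarts g.ve) :
    ∑ e ∈ g.edges.toFinset, (g.edgeArc e i + g.arcEdge i e) = 0 := by
  rw [← sum_edgeArc_eq_zero hg hi, Finset.sum_filter]
  refine Finset.sum_congr rfl fun e he => ?_
  by_cases hd : e.IsDoubled i (rotateLabel g.ve i) g.edges
  · by_cases hr : e.IsRegular g.ve <;> simp [edgeArc, arcEdge, hd, hr]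
  · rw [edgeArc_add_arcEdge hg (Multiset.mem_toFinset.1 he) hi hd, if_neg fun h => hd h.2]

end EdgeAndArc

section Square

variable {g : OddGraph} {e : OEdge} {i : ℕ}

theorem oddDelta_contractEdge (hg : g.IsSimple) (he : e ∈ g.edges) (hr : e.IsRegular g.ve) :
    oddDelta (signedContract g.ve (g.vi - 1) (g.edges.erase e) e.src e.tgt) =
      ∑ f ∈ g.edges.toFinset, g.edgeEdge e f + ∑ i ∈ arcStarts g.ve, g.edgeArc e i := by
  have hs : ((g.edges.erase e).map OEdge.ends).Nodup :=
    Multiset.nodup_of_le (Multiset.map_le_map (Multiset.erase_le e _)) hg.nodup_ends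
  have herase : (g.edges.erase e).toFinset = g.edges.toFinset.erase e := by
    ext f
    rw [Multiset.mem_toFinset, hg.nodup_ends.of_map.mem_erase_iff, Finset.mem_erase,
      Multiset.mem_toFinset]
  rw [oddDelta_signedContract, smul_delta_contract hs
    ((isQuotientMap_contractEdge hg he hr).isSimple hg), herase, ← Finset.sum_erase _ edgeEdge_self]
  congr 1
  · simp only [edgeEdge, IsContractiblePair, hr, true_and]
  · refine Finset.sum_congr rfl fun i hi => ?_
    have hi' := (mem_arcStarts.1 hi).2
    rw [edgeArc, if_pos hr, doubleContract, mergeMap_eq_self hr.2 hi',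
      mergeMap_eq_self hr.2 (rotateLabel_lt_iff.2 hi')]

theorem oddDelta_contractArc (hg : g.IsSimple) (hi : i ∈ arcStarts g.ve) :
    oddDelta (signedContract (g.ve - 1) g.vi g.edges i (rotateLabel g.ve i)) =
      ∑ e ∈ g.edges.toFinset, g.arcEdge i e + ∑ k ∈ arcStarts g.ve, g.arcArc i k := by
  have hij := rotateLabel_ne hi
  have hi' := (mem_arcStarts.1 hi).2
  have hj' := rotateLabel_lt_iff.2 hi'
  rw [oddDelta_signedContract, smul_delta_contract hg.nodup_ends
    ((isQuotientMap_contractArc hij hi' hj').isSimple hg), sum_arcStarts_sub_one hi fun j l =>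
      csign i (rotateLabel g.ve i) • signedContract (g.ve - 1 - 1) g.vi
        (g.edges.map (OEdge.contract i (rotateLabel g.ve i))) j l]
  simp only [arcEdge, OEdge.isRegular_contract_arc_iff hij hi' hj']
  rfl

theorem oddDelta_delta (g : OddGraph) : oddDelta g.delta = 0 := by
  have : IsAddTorsionFree Do := .of_isTorsionFree ℝ Do
  by_cases hg : g.IsSimple
  swap
  · rw [delta_eq_zero hg, map_zero]
  have hedge (e) (he : e ∈ g.edges.toFinset) : oddDelta (if e.IsRegular g.ve then
        signedContract g.ve (g.vi - 1) (g.edges.erase e) e.src e.tgt else 0) =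
      ∑ f ∈ g.edges.toFinset, g.edgeEdge e f + ∑ i ∈ arcStarts g.ve, g.edgeArc e i := by
    split_ifs with hr
    · exact oddDelta_contractEdge hg (Multiset.mem_toFinset.1 he) hr
    · simp [edgeEdge, IsContractiblePair, edgeArc, hr]
  rw [delta_eq hg, sum_map_filter_eq_sum_ite hg.nodup_ends.of_map, map_add, map_sum, map_sum,
    Finset.sum_congr rfl hedge, Finset.sum_congr rfl fun i hi => oddDelta_contractArc hg hi,
    Finset.sum_add_distrib, Finset.sum_add_distrib,
    sum_sum_eq_zero_of_antisymm _ _ fun e he f hf => edgeEdge_antisymm hg.nodup_ends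
      (Multiset.mem_toFinset.1 he) (Multiset.mem_toFinset.1 hf),
    sum_sum_eq_zero_of_antisymm _ _ fun i hi k hk => arcArc_antisymm hi hk, zero_add, add_zero,
    Finset.sum_comm, ← Finset.sum_add_distrib]
  refine Finset.sum_eq_zero fun i hi => ?_
  rw [← Finset.sum_add_distrib]
  exact sum_edgeArc_add_arcEdge hg.nodup_ends hi

end Square

end OddGraph

/-! ### Order and degree -/

namespace OddGraph

variable {g : OddGraph} {k m : ℤ}

theorem cls_mem_oddPiece (hk : g.ordZ = k) (hm : g.degZ = m) : g.cls ∈ oddPiece k m := by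
  by_cases hg : g.IsValid
  · exact Submodule.subset_span ⟨g, hg, hk, hm, rfl⟩
  · rw [cls_eq_zero_of_not_isSimple fun h => hg h.1]
    exact Submodule.zero_mem _

theorem delta_mem_oddPiece (g : OddGraph) : g.delta ∈ oddPiece g.ordZ (g.degZ + 1) := by
  by_cases hg : g.IsSimple
  swap
  · rw [delta_eq_zero hg]
    exact Submodule.zero_mem _
  rw [delta_eq hg]
  refine Submodule.add_mem _ (multiset_sum_mem _ fun x hx => ?_)
    (Submodule.sum_mem _ fun i hi => Submodule.smul_mem _ _ (cls_mem_oddPiece ?_ ?_))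
  · obtain ⟨e, he, rfl⟩ := Multiset.mem_map.1 hx
    obtain ⟨he, hr⟩ := Multiset.mem_filter.1 he
    have hlt := hg.1.1 e he
    have hvi : 1 ≤ g.vi := by
      unfold OEdge.IsRegular at hr
      unfold nv at hlt
      omega
    have hcard := Multiset.card_erase_add_one he
    refine Submodule.smul_mem _ _ (cls_mem_oddPiece ?_ ?_)
    · simp only [ordZ, numEdges, Multiset.card_map]
      omega
    · simp only [degZ, numEdges, Multiset.card_map]
      omega
  · simp only [ordZ, numEdges, Multiset.card_map]
  · have hve := (mem_arcStarts.1 hi).1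
    simp only [degZ, numEdges, Multiset.card_map]
    omega

end OddGraph

theorem oddDelta_oddDelta (x : Do) : oddDelta (oddDelta x) = 0 := by
  have h : oddDelta ∘ₗ oddDelta = 0 := by
    refine Submodule.linearMap_qext _ (Finsupp.lhom_ext' fun g => LinearMap.ext_ring ?_)
    change oddDelta (oddDelta g.cls) = 0
    rw [oddDelta_cls, OddGraph.oddDelta_delta]
  exact LinearMap.congr_fun h x

theorem map_oddPiece_le (k m : ℤ) : (oddPiece k m).map oddDelta ≤ oddPiece k (m + 1) := by
  rw [oddPiece, Submodule.map_span_le]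
  rintro _ ⟨g, -, rfl, rfl, rfl⟩
  change oddDelta g.cls ∈ _
  rw [oddDelta_cls]
  exact g.delta_mem_oddPiece

/-- The contraction operator `δ_o` is well defined on the quotient space
`D_o` (i.e. it descends through the sign relations on decorations, which is the existence
of the linear operator `δ` below together with the first property), it satisfies
`δ_o ∘ δ_o = 0`, and it maps `D_o^{k,m}` into `D_o^{k,m+1}` for every order `k` and every
degree `m`. -/
theorem odd_graph_complex_coboundary :
    ∃ δ : Do →ₗ[ℝ] Do,
      (∀ g : OddGraph,
        δ (Submodule.Quotient.mk (p := oddRelations) (Finsupp.single g 1)) =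
          Submodule.Quotient.mk (p := oddRelations) (deltaGen g)) ∧
      (∀ x : Do, δ (δ x) = 0) ∧
      (∀ k m : ℤ, (oddPiece k m).map δ ≤ oddPiece k (m + 1)) :=
  ⟨oddDelta, oddDelta_cls, oddDelta_oddDelta, map_oddPiece_le⟩
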